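/- arXiv:math/0302251 — 3 statements merged into one kernel-verified Lean document; each statement's English description precedes it below -/
import Mathlib

section
/- Let k₁, k₂ > 1, t ∈ ℝ, 0 < φ < π and −1 ≤ y ≤ 1. Then as x → +∞ (x real), w(x+iy) = 2π e^{2t(φ−π)+4iy(φ−π)} x^{2k₁+2k₂−2} e^{−4(π−φ)x} (1 + O(1/x)), and as x → −∞, w(x+iy) = 2π e^{2φt+4iφy} |x|^{2k₁+2k₂−2} e^{4φx} (1 + O(1/x)). -/
noncomputable section

open MeasureTheory Filter Topology Set Asymptotics ComplexConjugate
open Complex (I)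

/-- The weight function `w(z)`. -/
def wfun (k₁ k₂ t φ : ℝ) (z : ℂ) : ℂ :=
  ((1 / (2 * Real.pi) : ℝ) : ℂ) *
    Complex.exp ((2 * z + (t : ℂ)) * (2 * (φ : ℂ) - (Real.pi : ℂ))) *
    Complex.Gamma ((k₁ : ℂ) + I * t + I * z) * Complex.Gamma ((k₁ : ℂ) - I * t - I * z) *
    Complex.Gamma ((k₂ : ℂ) + I * z) * Complex.Gamma ((k₂ : ℂ) - I * z)

def Good (f : ℝ → ℂ) : Prop := (fun x => f x - 1) =O[atTop] fun x : ℝ => 1 / x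

lemma inv_O_one : (fun x : ℝ => 1 / x) =O[atTop] fun _ => (1:ℝ) := by
  apply Tendsto.isBigO_one (c := 0) ℝ
  simpa using tendsto_inv_atTop_zero (𝕜 := ℝ)

lemma Good.mul {f g : ℝ → ℂ} (hf : Good f) (hg : Good g) : Good (fun x => f x * g x) := by
  unfold Good at *
  have h1 : (fun x => (f x - 1) * (g x - 1)) =O[atTop] fun x : ℝ => 1 / x := by
    simpa using hf.mul (hg.trans inv_O_one)
  refine ((h1.add hf).add hg).congr_left ?_
  intro x; ring

lemma Good.congr {f g : ℝ → ℂ} (hf : Good f) (h : f =ᶠ[atTop] g) : Good g := by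
  unfold Good at *
  refine hf.congr' (h.mono fun x hx => by simp [hx]) EventuallyEq.rfl

lemma Good.comp_diff {h : ℂ → ℂ} (hd : DifferentiableAt ℂ h 0) (h0 : h 0 = 1) {u : ℝ → ℂ}
    (hu : u =O[atTop] fun x : ℝ => 1 / x) : Good (fun x => h (u x)) := by
  have ht : Tendsto u atTop (𝓝 0) := by
    apply hu.trans_tendsto
    simpa using tendsto_inv_atTop_zero (𝕜 := ℝ)
  have := hd.isBigO_sub.comp_tendsto ht
  simp only [h0, sub_zero] at this
  exact this.trans hu

lemma const_div_O (κ : ℂ) : (fun x : ℝ => κ / x) =O[atTop] fun x : ℝ => 1 / x := by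
  apply IsBigO.of_bound ‖κ‖
  filter_upwards with x
  simp [div_eq_mul_inv]

lemma rho_bound (c : ℝ) : ∃ C > 0, ∃ R > 0, ∀ w : ℂ, R ≤ ‖w‖ →
    ‖(1 + 1 / w) ^ (c:ℂ) / (1 + c / w) - 1‖ ≤ C / ‖w‖ ^ 2 := by
  set h : ℂ → ℂ := fun δ => (1 + δ) ^ (c:ℂ) / (1 + c * δ) - 1 with hh
  have hd : HasDerivAt h 0 0 := by
    have e1 : HasDerivAt (fun δ : ℂ => 1 + δ) 1 0 := (hasDerivAt_id (0:ℂ)).const_add 1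
    have e2 : HasDerivAt (fun δ : ℂ => (1 + δ) ^ (c:ℂ)) (c * (1 + 0) ^ ((c:ℂ) - 1) * 1) 0 :=
      e1.cpow_const (by simp)
    have e3 : HasDerivAt (fun δ : ℂ => 1 + (c:ℂ) * δ) (c * 1) 0 :=
      ((hasDerivAt_id (0:ℂ)).const_mul (c:ℂ)).const_add 1
    have := (e2.div e3 (by simp)).sub_const 1
    refine this.congr_deriv ?_
    simp
  have han : AnalyticAt ℂ h 0 := by
    apply AnalyticAt.sub _ analyticAt_const
    apply AnalyticAt.div
    · apply AnalyticAt.cpow (by fun_prop) (by fun_prop)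
      simp
    · fun_prop
    · simp
  obtain ⟨p, hp⟩ := han
  have hO := hp.isBigO_sub_partialSum_pow 2
  have hps : ∀ y, p.partialSum 2 y = 0 := by
    intro y
    have h0 : p.coeff 0 = 0 := by
      rw [FormalMultilinearSeries.coeff]
      have := hp.coeff_zero 1
      rw [this]; simp [hh]
    have h1 : p.coeff 1 = 0 := by
      exact hp.deriv.symm.trans hd.deriv
    simp [FormalMultilinearSeries.partialSum, Finset.sum_range_succ, h0, h1]
  simp only [hps, sub_zero, zero_add] at hO
  obtain ⟨C, hC, hb⟩ := hO.exists_pos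
  have hb := hb.bound
  rw [Metric.eventually_nhds_iff] at hb
  obtain ⟨ε, hε, hb⟩ := hb
  refine ⟨C, hC, 2 / ε, by positivity, fun w hw => ?_⟩
  have hw0 : 0 < ‖w‖ := lt_of_lt_of_le (by positivity) hw
  have := @hb (1 / w) (by
    simp only [dist_zero_right, norm_div, norm_one]
    rw [div_lt_iff₀ hw0]
    rw [div_le_iff₀ hε] at hw
    linarith)
  simpa [hh, div_eq_mul_inv] using this

lemma sum_bound (s : ℝ) (hs : 2 ≤ s) (n : ℕ) :
    ∑ j ∈ Finset.range n, 1 / ((j:ℝ) + s) ^ 2 ≤ 2 / s := by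
  have : ∑ j ∈ Finset.range n, 1 / ((j:ℝ) + s) ^ 2 ≤ 1 / (s - 1) - 1 / (s + n - 1) := by
    induction n with
    | zero => simp
    | succ n ih =>
      rw [Finset.sum_range_succ]
      have hn : (0:ℝ) ≤ n := n.cast_nonneg
      have h1 : 1 / ((n:ℝ) + s) ^ 2 ≤ 1 / (s + n - 1) - 1 / (s + n) := by
        rw [div_sub_div _ _ (by linarith) (by linarith), div_le_div_iff₀ (by positivity) (by nlinarith)]
        nlinarith
      push_cast
      have : s + (n + 1) - 1 = s + n := by ring
      rw [this]; linarith
  have hn : (0:ℝ) ≤ n := n.cast_nonneg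
  have h2 : 0 ≤ 1 / (s + n - 1) := by apply div_nonneg; simp; linarith
  have h3 : 1 / (s - 1) ≤ 2 / s := by
    rw [div_le_div_iff₀ (by linarith) (by linarith)]; linarith
  linarith

lemma cpow_step (c : ℝ) (w : ℂ) (hw : 0 < w.im) : (w + 1) ^ (c:ℂ) = w ^ (c:ℂ) * (1 + 1 / w) ^ (c:ℂ) := by
  have hw0 : w ≠ 0 := by rintro rfl; simp at hw
  have him : (1 + 1 / w).im < 0 := by
    simp [Complex.inv_im]
    apply div_neg_of_neg_of_pos (by linarith) (by simpa [Complex.normSq_pos])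
  have h1 : 1 + 1 / w ≠ 0 := by intro h; rw [h] at him; simp at him
  have e : w + 1 = w * (1 + 1 / w) := by field_simp
  have hl : Complex.log (w * (1 + 1 / w)) = Complex.log w + Complex.log (1 + 1 / w) := by
    apply Complex.log_mul hw0 h1
    have a1 := Complex.arg_neg_iff.2 him
    have a2 := Complex.neg_pi_lt_arg (1 + 1 / w)
    have a3 := Complex.arg_nonneg_iff.2 hw.le
    have a4 := Complex.arg_le_pi w
    constructor <;> linarith
  rw [e, Complex.cpow_def_of_ne_zero (mul_ne_zero hw0 h1), Complex.cpow_def_of_ne_zero hw0,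
    Complex.cpow_def_of_ne_zero h1, hl, ← Complex.exp_add]
  ring_nf

lemma mul_cpow_pos (r : ℝ) (hr : 0 < r) (u c : ℂ) (hu : u ≠ 0) :
    ((r:ℂ) * u) ^ c = (r:ℂ) ^ c * u ^ c := by
  have hr' : (r:ℂ) ≠ 0 := by exact_mod_cast hr.ne'
  rw [Complex.cpow_def_of_ne_zero (mul_ne_zero hr' hu), Complex.cpow_def_of_ne_zero hr',
    Complex.cpow_def_of_ne_zero hu, Complex.log_ofReal_mul hr hu, ← Complex.exp_add,
    Complex.ofReal_log hr.le]
  ring_nf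

lemma prod_rho (c : ℝ) (z : ℂ) (hz : 0 < z.im) (n : ℕ) :
    ∏ j ∈ Finset.range n, ((1 + 1 / (z + j)) ^ (c:ℂ) / (1 + c / (z + j))) =
      (∏ j ∈ Finset.range n, (z + j)) / (∏ j ∈ Finset.range n, (z + c + j)) *
        ((z + n) ^ (c:ℂ) / z ^ (c:ℂ)) := by
  have hz0 : ∀ x : ℝ, z + x ≠ 0 := by
    intro x h
    have := congrArg Complex.im h
    simp at this; linarith
  have hz00 : z ≠ 0 := by simpa using hz0 0
  induction n with
  | zero => simp [Complex.cpow_eq_zero_iff, hz00]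
  | succ n ih =>
    rw [Finset.prod_range_succ, Finset.prod_range_succ, Finset.prod_range_succ, ih]
    have h1 : z + n ≠ 0 := by simpa using hz0 n
    have h2 : z + c + n ≠ 0 := by have := hz0 (c + n); push_cast at this; rwa [← add_assoc] at this
    have h3 : (z + n) ^ (c:ℂ) ≠ 0 := by simp [Complex.cpow_eq_zero_iff, h1]
    have h4 : z ^ (c:ℂ) ≠ 0 := by simp [Complex.cpow_eq_zero_iff, hz00]
    have h5 : ∏ j ∈ Finset.range n, (z + c + j) ≠ 0 := by
      rw [Finset.prod_ne_zero_iff]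
      intro j _
      have := hz0 (c + j); push_cast at this; rwa [← add_assoc] at this
    have e := cpow_step c (z + n) (by simpa using hz)
    have e2 : 1 + (c:ℂ) / (z + n) = (z + c + n) / (z + n) := by field_simp; ring
    push_cast
    rw [← add_assoc, e, e2]
    field_simp

lemma prod_tendsto (c : ℝ) (z : ℂ) (hz : 0 < z.im) :
    Tendsto (fun n : ℕ => ∏ j ∈ Finset.range (n + 1), ((1 + 1 / (z + j)) ^ (c:ℂ) / (1 + c / (z + j))))
      atTop (𝓝 (Complex.Gamma (z + c) / (Complex.Gamma z * z ^ (c:ℂ)))) := by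
  have hz0 : ∀ x : ℝ, z + x ≠ 0 := by
    intro x h
    have := congrArg Complex.im h
    simp at this; linarith
  have hz00 : z ≠ 0 := by simpa using hz0 0
  have h4 : z ^ (c:ℂ) ≠ 0 := by simp [Complex.cpow_eq_zero_iff, hz00]
  have hG : Complex.Gamma z ≠ 0 := by
    apply Complex.Gamma_ne_zero
    intro m h
    apply hz0 m
    rw [h]; simp
  have t1 := (Complex.GammaSeq_tendsto_Gamma (z + c)).div
    ((Complex.GammaSeq_tendsto_Gamma z).mul_const (z ^ (c:ℂ))) (mul_ne_zero hG h4)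
  have t2 : Tendsto (fun n : ℕ => (1 + (z + 1) / (n:ℂ)) ^ (c:ℂ)) atTop (𝓝 1) := by
    have a : Tendsto (fun n : ℕ => (1 + (z + 1) / (n:ℂ))) atTop (𝓝 (1 + 0)) :=
      tendsto_const_nhds.add (tendsto_const_div_atTop_nhds_zero_nat (𝕜 := ℂ) (z + 1))
    have b : ContinuousAt (fun w : ℂ => w ^ (c:ℂ)) (1 + 0) :=
      (continuousAt_id).cpow continuousAt_const (by simp)
    have := b.tendsto.comp a
    simpa [Function.comp_def] using this
  have t3 := t1.mul t2
  rw [mul_one] at t3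
  refine t3.congr' ?_
  filter_upwards [eventually_gt_atTop 0] with n hn
  have hn' : (n:ℂ) ≠ 0 := by exact_mod_cast hn.ne'
  rw [prod_rho c z hz]
  simp only [Complex.GammaSeq, Pi.div_apply]
  have h5 : ∏ j ∈ Finset.range (n+1), (z + c + j) ≠ 0 := by
    rw [Finset.prod_ne_zero_iff]
    intro j _
    have := hz0 (c + j); push_cast at this; rwa [← add_assoc] at this
  have h6 : ∏ j ∈ Finset.range (n+1), (z + j) ≠ 0 := by
    rw [Finset.prod_ne_zero_iff]
    intro j _
    simpa using hz0 j
  have h7 : (z + ((n+1 : ℕ):ℂ)) = ((n:ℝ):ℂ) * (1 + (z+1) / n) := by push_cast; field_simp; ring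
  have h8 : (1 + (z+1) / n) ≠ 0 := by
    intro h
    rw [h] at h7
    apply hz0 ((n+1:ℕ):ℝ)
    simpa using h7
  rw [h7, mul_cpow_pos _ (by exact_mod_cast hn) _ _ h8, Complex.cpow_add _ _ hn']
  have h9 : (n:ℂ) ^ z ≠ 0 := by simp [Complex.cpow_eq_zero_iff, hn']
  have h10 : (n:ℂ) ^ (c:ℂ) ≠ 0 := by simp [Complex.cpow_eq_zero_iff, hn']
  have h11 : (n.factorial : ℂ) ≠ 0 := by exact_mod_cast n.factorial_ne_zero
  push_cast
  field_simp

lemma ratio_good (σ c : ℝ) : Good (fun s : ℝ => Complex.Gamma ((σ:ℂ) + I * s + c) /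
    (Complex.Gamma ((σ:ℂ) + I * s) * ((σ:ℂ) + I * s) ^ (c:ℂ))) := by
  obtain ⟨C, hC, R, hR, hb⟩ := rho_bound c
  unfold Good
  apply IsBigO.of_bound (16 * C)
  filter_upwards [eventually_ge_atTop 2, eventually_ge_atTop R, eventually_ge_atTop (2 * |σ|),
    eventually_ge_atTop (8 * C)] with s h2 hRs hσ hCs
  set z : ℂ := (σ:ℂ) + I * s with hz
  have him : z.im = s := by simp [hz]
  have hre : z.re = σ := by simp [hz]
  have ht := prod_tendsto c z (by rw [him]; linarith)
  have hs0 : 0 < s := by linarith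
  have hle : ∀ n : ℕ, ‖∏ j ∈ Finset.range (n + 1),
      ((1 + 1 / (z + j)) ^ (c:ℂ) / (1 + c / (z + j))) - 1‖ ≤ 16 * C * ‖1 / s‖ := by
    intro n
    have e := Finset.norm_prod_one_add_sub_one_le (Finset.range (n+1))
      (fun j : ℕ => (1 + 1 / (z + j)) ^ (c:ℂ) / (1 + c / (z + j)) - 1)
    simp only [add_sub_cancel] at e
    have hsum : ∑ j ∈ Finset.range (n+1), ‖(1 + 1 / (z + j)) ^ (c:ℂ) / (1 + c / (z + j)) - 1‖
        ≤ 8 * C / s := by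
      calc _ ≤ ∑ j ∈ Finset.range (n+1), 4 * C * (1 / ((j:ℝ) + s) ^ 2) := by
            apply Finset.sum_le_sum
            intro j _
            have hj : (0:ℝ) ≤ j := j.cast_nonneg
            have him' : (z + j).im = s := by simp [him]
            have hre' : (z + j).re = σ + j := by simp [hre]
            have hn : R ≤ ‖z + j‖ := by
              have := Complex.abs_im_le_norm (z + j)
              rw [him', abs_of_pos hs0] at this
              linarith
            refine (hb _ hn).trans ?_
            have hsq : ‖z + j‖ ^ 2 = (σ + j) ^ 2 + s ^ 2 := by
              rw [Complex.sq_norm, Complex.normSq_apply, him', hre']; ring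
            have hσ2 : 4 * σ ^ 2 ≤ s ^ 2 := by
              rw [← sq_abs σ]
              nlinarith [abs_nonneg σ]
            rw [hsq]
            have : 4 * C * (1 / ((j:ℝ) + s) ^ 2) = C / (((j:ℝ) + s) ^ 2 / 4) := by
              field_simp
            rw [this]
            apply div_le_div_of_nonneg_left hC.le (by positivity)
            nlinarith [sq_nonneg ((j:ℝ) + 2 * σ), sq_nonneg ((j:ℝ) - s)]
        _ = 4 * C * ∑ j ∈ Finset.range (n+1), (1 / ((j:ℝ) + s) ^ 2) := by rw [Finset.mul_sum]
        _ ≤ 4 * C * (2 / s) := by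
            apply mul_le_mul_of_nonneg_left (sum_bound s h2 _) (by positivity)
        _ = 8 * C / s := by ring
    have h8 : 8 * C / s ≤ 1 := by rw [div_le_one hs0]; exact hCs
    have hp : 0 ≤ 8 * C / s := by positivity
    have h9 := Real.abs_exp_sub_one_le (x := 8 * C / s) (by rw [abs_of_nonneg hp]; exact h8)
    have h10 := le_abs_self (Real.exp (8 * C / s) - 1)
    have h11 := Real.exp_le_exp.2 hsum
    rw [abs_of_nonneg hp] at h9
    have : 16 * C * ‖1 / s‖ = 2 * (8 * C / s) := by
      rw [Real.norm_eq_abs, abs_of_pos (by positivity)]; ring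
    rw [this]; linarith
  exact le_of_tendsto ((ht.sub_const 1).norm) (Eventually.of_forall hle)

lemma H_good (a b : ℝ) : Good (fun s : ℝ =>
    Complex.Gamma ((a:ℂ) + I * s) * Complex.Gamma ((b:ℂ) - I * s) /
    (2 * Real.pi * (s:ℂ) ^ ((a + b - 1 : ℝ) : ℂ) * Complex.exp (-(Real.pi * s)) *
      Complex.exp (I * Real.pi * (a - b) / 2))) := by
  have g1 := ratio_good (1 - b) (a + b - 1)
  have g2 : Good (fun s : ℝ => (fun δ : ℂ => (I + δ) ^ ((a + b - 1 : ℝ) : ℂ) / I ^ ((a + b - 1 : ℝ) : ℂ))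
      (((1 - b : ℝ) : ℂ) / s)) := by
    apply Good.comp_diff (h := fun δ : ℂ => (I + δ) ^ ((a + b - 1 : ℝ) : ℂ) / I ^ ((a + b - 1 : ℝ) : ℂ)) _ _ (const_div_O _)
    · apply DifferentiableAt.div_const
      apply DifferentiableAt.cpow (by fun_prop) (by fun_prop)
      simp [Complex.slitPlane]
    · simp [Complex.cpow_eq_zero_iff]
  have g3 : Good (fun s : ℝ => (fun δ : ℂ => 1 / (1 - δ))
      (Complex.exp (-2 * I * Real.pi * b) * ((Real.exp (-2 * Real.pi * s) : ℝ) : ℂ))) := by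
    apply Good.comp_diff (h := fun δ : ℂ => 1 / (1 - δ))
    · apply DifferentiableAt.div (by fun_prop) (by fun_prop) (by simp)
    · simp
    · apply IsBigO.const_mul_left
      apply IsBigO.of_bound 1
      filter_upwards [eventually_gt_atTop 0] with s hs
      rw [Complex.norm_real, Real.norm_eq_abs, Real.norm_eq_abs, abs_of_pos (Real.exp_pos _),
        abs_of_pos (by positivity), one_mul, neg_mul, neg_mul, Real.exp_neg, ← one_div]
      apply one_div_le_one_div_of_le hs
      have := Real.add_one_le_exp (2 * Real.pi * s)
      nlinarith [Real.pi_gt_three]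
  refine ((g1.mul g2).mul g3).congr ?_
  filter_upwards [eventually_gt_atTop 0] with s hs
  set c : ℝ := a + b - 1 with hc
  have hsC : (s:ℂ) ≠ 0 := by exact_mod_cast hs.ne'
  have e1 : (((1 - b : ℝ) : ℂ) + I * s) = (s:ℂ) * (I + ((1 - b : ℝ) : ℂ) / s) := by
    field_simp; ring
  have hne : I + ((1 - b : ℝ) : ℂ) / s ≠ 0 := by
    intro h
    have := congrArg Complex.im h
    rw [← Complex.ofReal_div] at this
    simp at this
  have e2 : (((1 - b : ℝ) : ℂ) + I * s) ^ (c:ℂ) =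
    (s:ℂ) ^ (c:ℂ) * (I + ((1 - b : ℝ) : ℂ) / s) ^ (c:ℂ) := by
    rw [e1]; exact mul_cpow_pos s hs _ _ hne
  have hn1 : (s:ℂ) ^ (c:ℂ) ≠ 0 := by simp [Complex.cpow_eq_zero_iff, hsC]
  have hn2 : (I + ((1 - b : ℝ) : ℂ) / s) ^ (c:ℂ) ≠ 0 := by
    rw [Complex.cpow_def_of_ne_zero hne]; exact Complex.exp_ne_zero _
  have e3 : I ^ (c:ℂ) = Complex.exp (I * Real.pi * (a - b) / 2) * Complex.exp (I * Real.pi * b) / I := by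
    have hI : I = Complex.exp (Real.pi / 2 * I) := Complex.exp_pi_div_two_mul_I.symm
    rw [Complex.cpow_def_of_ne_zero Complex.I_ne_zero, Complex.log_I, ← Complex.exp_add]
    conv_rhs => rw [← Complex.exp_pi_div_two_mul_I]
    rw [← Complex.exp_sub]
    congr 1
    simp [hc]; ring
  have e4 : (((1 - b : ℝ) : ℂ) + I * s) + (c:ℂ) = a + I * s := by simp [hc]; ring
  have hrefl := Complex.Gamma_mul_Gamma_one_sub ((b:ℂ) - I * s)
  have e5 : 1 - ((b:ℂ) - I * s) = (((1 - b : ℝ) : ℂ) + I * s) := by push_cast; ring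
  have hG : Complex.Gamma (((1 - b : ℝ) : ℂ) + I * s) ≠ 0 := by
    apply Complex.Gamma_ne_zero
    intro m h
    have := congrArg Complex.im h
    simp at this; exact hs.ne' this
  rw [e5] at hrefl
  have e6 := (eq_div_iff hG).2 hrefl
  set q : ℂ := Complex.exp (I * Real.pi * b) with hq
  set p : ℂ := Complex.exp (-(Real.pi * s)) with hp
  have hq0 : q ≠ 0 := Complex.exp_ne_zero _
  have hp0 : p ≠ 0 := Complex.exp_ne_zero _
  have e7 : Complex.sin (Real.pi * ((b:ℂ) - I * s)) = (q⁻¹ * p - q * p⁻¹) * I / 2 := by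
    rw [Complex.sin, hq, hp, ← Complex.exp_neg, ← Complex.exp_neg, ← Complex.exp_add,
      ← Complex.exp_add]
    have i2 := Complex.I_mul_I
    congr 4
    · linear_combination (Real.pi * s) * i2
    · linear_combination (-Real.pi * s) * i2
  have e8 : Complex.exp (-2 * I * Real.pi * b) = q⁻¹ ^ 2 := by
    rw [hq, ← Complex.exp_neg, ← Complex.exp_nat_mul]; congr 1; push_cast; ring
  have e9 : ((Real.exp (-2 * Real.pi * s) : ℝ) : ℂ) = p ^ 2 := by
    rw [hp, ← Complex.exp_nat_mul]; push_cast; congr 1; ring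
  have hd : q ^ 2 - p ^ 2 ≠ 0 := by
    intro h
    have h' : q ^ 2 = p ^ 2 := sub_eq_zero.1 h
    have := congrArg norm h'
    rw [norm_pow, norm_pow, hq, hp, Complex.norm_exp, Complex.norm_exp] at this
    simp at this
    have h3 : Real.exp (-(Real.pi * s)) < 1 := by
      rw [Real.exp_lt_one_iff]; have := Real.pi_pos; nlinarith
    have h4 := Real.exp_pos (-(Real.pi * s))
    nlinarith
  rw [e4, e2, e6, e7, e8, e9]
  rw [e3]
  have hE : Complex.exp (I * Real.pi * (a - b) / 2) ≠ 0 := Complex.exp_ne_zero _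
  have hpi : (Real.pi : ℂ) ≠ 0 := by exact_mod_cast Real.pi_ne_zero
  have d1 : (1 - q⁻¹ ^ 2 * p ^ 2) = (q ^ 2 - p ^ 2) / q ^ 2 := by field_simp
  have d2 : (q⁻¹ * p - q * p⁻¹) = -(q ^ 2 - p ^ 2) / (q * p) := by field_simp; ring
  rw [d1, d2]
  have hI := Complex.I_ne_zero
  have hI2 := Complex.I_sq
  generalize (I + ((1 - b : ℝ) : ℂ) / s) ^ (c:ℂ) = A at *
  field_simp
  rw [hI2]; try ring

lemma H_shift (a b t : ℝ) : Good (fun x : ℝ =>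
    Complex.Gamma ((a:ℂ) + I * (x + t)) * Complex.Gamma ((b:ℂ) - I * (x + t)) /
    (2 * Real.pi * (x:ℂ) ^ ((a + b - 1 : ℝ) : ℂ) * Complex.exp (-(Real.pi * (x + t))) *
      Complex.exp (I * Real.pi * (a - b) / 2))) := by
  have g1 : Good (fun x : ℝ => Complex.Gamma ((a:ℂ) + I * ((x + t : ℝ) : ℂ)) *
      Complex.Gamma ((b:ℂ) - I * ((x + t : ℝ) : ℂ)) /
    (2 * Real.pi * ((x + t : ℝ) : ℂ) ^ ((a + b - 1 : ℝ) : ℂ) *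
      Complex.exp (-(Real.pi * ((x + t : ℝ) : ℂ))) *
      Complex.exp (I * Real.pi * (a - b) / 2))) := by
    have h := (H_good a b).comp_tendsto (tendsto_atTop_add_const_right atTop t tendsto_id)
    refine IsBigO.trans h ?_
    apply IsBigO.of_bound 2
    filter_upwards [eventually_gt_atTop 0, eventually_ge_atTop (2 * |t|)] with x hx hxt
    have h1 := neg_abs_le t
    have : 0 < x + t := by
      rcases le_or_gt 0 t with h | h
      · linarith
      · rw [abs_of_neg h] at hxt; linarith
    simp only [Function.comp, id, Real.norm_eq_abs]
    rw [abs_of_pos (by positivity), abs_of_pos (by positivity), mul_one_div,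
      div_le_div_iff₀ this hx]
    linarith
  have g2 : Good (fun x : ℝ => (fun δ : ℂ => (1 + δ) ^ ((a + b - 1 : ℝ) : ℂ)) ((t : ℂ) / x)) := by
    apply Good.comp_diff (h := fun δ : ℂ => (1 + δ) ^ ((a + b - 1 : ℝ) : ℂ)) _ _ (const_div_O _)
    · apply DifferentiableAt.cpow (by fun_prop) (by fun_prop)
      simp [Complex.slitPlane]
    · simp
  refine (g1.mul g2).congr ?_
  filter_upwards [eventually_gt_atTop 0, eventually_gt_atTop |t|] with x hx hxt
  have hxC : (x:ℂ) ≠ 0 := by exact_mod_cast hx.ne'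
  have hs : 0 < x + t := by have := neg_abs_le t; linarith
  have hsC : ((x + t : ℝ):ℂ) ≠ 0 := by exact_mod_cast hs.ne'
  have e1 : ((x + t : ℝ):ℂ) = x * (1 + (t:ℂ) / x) := by push_cast; field_simp
  have hne : 1 + (t:ℂ) / x ≠ 0 := by intro h; rw [h] at e1; simp at e1; exact hsC (by simpa using e1)
  have e2 : ((x + t : ℝ):ℂ) ^ ((a + b - 1 : ℝ) : ℂ) =
      (x:ℂ) ^ ((a + b - 1 : ℝ) : ℂ) * (1 + (t:ℂ) / x) ^ ((a + b - 1 : ℝ) : ℂ) := by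
    rw [e1]; exact mul_cpow_pos x hx _ _ hne
  have hn : (1 + (t:ℂ) / x) ^ ((a + b - 1 : ℝ) : ℂ) ≠ 0 := by
    rw [Complex.cpow_def_of_ne_zero hne]; exact Complex.exp_ne_zero _
  have hn' : (x:ℂ) ^ ((a + b - 1 : ℝ) : ℂ) ≠ 0 := by
    rw [Complex.cpow_def_of_ne_zero hxC]; exact Complex.exp_ne_zero _
  rw [e2]
  simp only [Complex.ofReal_add x t]
  generalize (1 + (t:ℂ) / x) ^ ((a + b - 1 : ℝ) : ℂ) = A at *
  have hE : Complex.exp (I * Real.pi * (a - b) / 2) ≠ 0 := Complex.exp_ne_zero _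
  have hE' : Complex.exp (-(Real.pi * ((x:ℂ) + t))) ≠ 0 := Complex.exp_ne_zero _
  have hpi : (Real.pi : ℂ) ≠ 0 := by exact_mod_cast Real.pi_ne_zero
  field_simp


lemma final_alg {A B C D P X X1 X2 E E1 E2 F1 F2 E' E'' : ℂ} (hP : P ≠ 0) (hX1 : X1 ≠ 0)
    (hX2 : X2 ≠ 0) (h1 : E1 ≠ 0) (h2 : E2 ≠ 0) (h3 : F1 ≠ 0) (h4 : F2 ≠ 0) (h5 : E' ≠ 0)
    (h6 : E'' ≠ 0) (hX : X = X1 * X2) (hE : E * (E1 * F1 * (E2 * F2)) = E' * E'') :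
    A * B / (2 * P * X1 * E1 * F1) * (C * D / (2 * P * X2 * E2 * F2)) =
      1 / (2 * P) * E * A * B * C * D / (2 * P * E' * X * E'') := by
  subst hX
  have : E = E' * E'' / (E1 * F1 * (E2 * F2)) := by
    rw [eq_div_iff (mul_ne_zero (mul_ne_zero h1 h3) (mul_ne_zero h2 h4))]; exact hE
  rw [this]
  field_simp

/-- Asymptotic behaviour of the weight function `w(x+iy)` as `x → ±∞`:
`w(x+iy) = 2π e^{2t(φ−π)+4iy(φ−π)} x^{2k₁+2k₂−2} e^{−4(π−φ)x}(1+O(1/x))` as `x → ∞`, and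
`w(x+iy) = 2π e^{2φt+4iφy} |x|^{2k₁+2k₂−2} e^{4φx}(1+O(1/x))` as `x → −∞`. -/
theorem weight_asymptotics (k₁ k₂ : ℝ) (hk₁ : 1 < k₁) (hk₂ : 1 < k₂) (t : ℝ)
    (φ : ℝ) (hφ₀ : 0 < φ) (hφπ : φ < Real.pi) (y : ℝ) (hy : -1 ≤ y) (hy' : y ≤ 1) :
    ((fun x : ℝ => wfun k₁ k₂ t φ ((x : ℂ) + I * y) /
        (((2 * Real.pi : ℝ) : ℂ) *
          Complex.exp (((2 * t * (φ - Real.pi) : ℝ) : ℂ) + 4 * I * y * ((φ : ℂ) - Real.pi)) *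
          (x : ℂ) ^ ((2 * k₁ + 2 * k₂ - 2 : ℝ) : ℂ) *
          Complex.exp (((-(4 * (Real.pi - φ) * x) : ℝ) : ℂ))) - 1)
      =O[atTop] fun x : ℝ => 1 / x) ∧
    ((fun x : ℝ => wfun k₁ k₂ t φ ((x : ℂ) + I * y) /
        (((2 * Real.pi : ℝ) : ℂ) *
          Complex.exp (((2 * φ * t : ℝ) : ℂ) + 4 * I * φ * (y : ℂ)) *
          ((|x| : ℝ) : ℂ) ^ ((2 * k₁ + 2 * k₂ - 2 : ℝ) : ℂ) *
          Complex.exp (((4 * φ * x : ℝ) : ℂ))) - 1)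
      =O[atBot] fun x : ℝ => 1 / x) := by
  have hpi : (Real.pi : ℂ) ≠ 0 := by exact_mod_cast Real.pi_ne_zero
  have i2 := Complex.I_mul_I
  constructor
  · refine ((H_shift (k₁ - y) (k₁ + y) t).mul (H_shift (k₂ - y) (k₂ + y) 0)).congr ?_
    filter_upwards [eventually_gt_atTop 0] with x hx
    have hxC : (x:ℂ) ≠ 0 := by exact_mod_cast hx.ne'
    have hp : ∀ c : ℂ, (x:ℂ) ^ c ≠ 0 := fun c => by simp [Complex.cpow_eq_zero_iff, hxC]
    have a1 : (k₁:ℂ) + I * t + I * (x + I * y) = ((k₁ - y : ℝ) : ℂ) + I * (x + t) := by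
      push_cast; linear_combination (y:ℂ) * i2
    have a2 : (k₁:ℂ) - I * t - I * (x + I * y) = ((k₁ + y : ℝ) : ℂ) - I * (x + t) := by
      push_cast; linear_combination (-y:ℂ) * i2
    have a3 : (k₂:ℂ) + I * (x + I * y) = ((k₂ - y : ℝ) : ℂ) + I * (x + (0:ℝ)) := by
      push_cast; linear_combination (y:ℂ) * i2
    have a4 : (k₂:ℂ) - I * (x + I * y) = ((k₂ + y : ℝ) : ℂ) - I * (x + (0:ℝ)) := by
      push_cast; linear_combination (-y:ℂ) * i2
    rw [wfun, a1, a2, a3, a4, Complex.ofReal_div, Complex.ofReal_mul 2 Real.pi, Complex.ofReal_one,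
      Complex.ofReal_ofNat]
    refine final_alg hpi (hp _) (hp _) (Complex.exp_ne_zero _) (Complex.exp_ne_zero _)
      (Complex.exp_ne_zero _) (Complex.exp_ne_zero _) (Complex.exp_ne_zero _) (Complex.exp_ne_zero _)
      ?_ ?_
    · rw [← Complex.cpow_add _ _ hxC]; congr 1; push_cast; ring
    · simp only [← Complex.exp_add]
      congr 1; push_cast; ring
  · have key : Good (fun x : ℝ => wfun k₁ k₂ t φ (((-x : ℝ) : ℂ) + I * y) /
        (((2 * Real.pi : ℝ) : ℂ) *
          Complex.exp (((2 * φ * t : ℝ) : ℂ) + 4 * I * φ * (y : ℂ)) *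
          ((|-x| : ℝ) : ℂ) ^ ((2 * k₁ + 2 * k₂ - 2 : ℝ) : ℂ) *
          Complex.exp (((4 * φ * (-x) : ℝ) : ℂ)))) := by
      refine ((H_shift (k₁ + y) (k₁ - y) (-t)).mul (H_shift (k₂ + y) (k₂ - y) 0)).congr ?_
      filter_upwards [eventually_gt_atTop 0] with x hx
      have hxC : (x:ℂ) ≠ 0 := by exact_mod_cast hx.ne'
      have hp : ∀ c : ℂ, (x:ℂ) ^ c ≠ 0 := fun c => by simp [Complex.cpow_eq_zero_iff, hxC]
      have a1 : (k₁:ℂ) + I * t + I * (((-x : ℝ) : ℂ) + I * y) =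
          ((k₁ - y : ℝ) : ℂ) - I * (x + ((-t : ℝ) : ℂ)) := by
        push_cast; linear_combination (y:ℂ) * i2
      have a2 : (k₁:ℂ) - I * t - I * (((-x : ℝ) : ℂ) + I * y) =
          ((k₁ + y : ℝ) : ℂ) + I * (x + ((-t : ℝ) : ℂ)) := by
        push_cast; linear_combination (-y:ℂ) * i2
      have a3 : (k₂:ℂ) + I * (((-x : ℝ) : ℂ) + I * y) =
          ((k₂ - y : ℝ) : ℂ) - I * (x + (0:ℝ)) := by
        push_cast; linear_combination (y:ℂ) * i2
      have a4 : (k₂:ℂ) - I * (((-x : ℝ) : ℂ) + I * y) =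
          ((k₂ + y : ℝ) : ℂ) + I * (x + (0:ℝ)) := by
        push_cast; linear_combination (-y:ℂ) * i2
      rw [wfun, a1, a2, a3, a4, Complex.ofReal_div, Complex.ofReal_mul 2 Real.pi, Complex.ofReal_one,
        Complex.ofReal_ofNat, abs_neg, abs_of_pos hx,
        mul_comm (Complex.Gamma (((k₁ + y : ℝ) : ℂ) + _)), mul_comm (Complex.Gamma (((k₂ + y : ℝ) : ℂ) + _))]
      refine final_alg hpi (hp _) (hp _) (Complex.exp_ne_zero _) (Complex.exp_ne_zero _)
        (Complex.exp_ne_zero _) (Complex.exp_ne_zero _) (Complex.exp_ne_zero _) (Complex.exp_ne_zero _)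
        ?_ ?_
      · rw [← Complex.cpow_add _ _ hxC]; congr 1; push_cast; ring
      · simp only [← Complex.exp_add]
        congr 1; push_cast; ring
    have h := IsBigO.comp_tendsto key tendsto_neg_atBot_atTop
    simp only [Function.comp_def, neg_neg] at h
    refine h.trans ?_
    apply IsBigO.of_bound 1
    filter_upwards with x
    simp
end
end

section
/- Let k₁, k₂ > 0, t ∈ ℝ, 0 < φ < π. Then (i) the polynomials are dense in L²(ℝ, w(x)dx) (indeed ∫_ℝ e^{ε|x|} w(x) dx < ∞ for 0 < ε < min{4φ, 4(π−φ)}, so the moment problem for w(x)dx is determinate), and (ii) Λ is symmetric on polynomials: for all polynomials p, q with complex coefficients, ∫_ℝ (Λp)(x) conj(q(x)) w(x) dx = ∫_ℝ p(x) conj((Λq)(x)) w(x) dx. Hence Λ with domain the polynomials is a densely defined symmetric operator on L²(ℝ, w(x)dx). -/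
noncomputable section

open MeasureTheory Filter Topology Set Asymptotics ComplexConjugate
open Complex (I)

/-- `α₊(z) = −e^{2iφ}(k₂ − iz)(k₁ − i(t+z))`. -/
def alphaP (k₁ k₂ t φ : ℝ) (z : ℂ) : ℂ :=
  -Complex.exp (2 * I * φ) * ((k₂ : ℂ) - I * z) * ((k₁ : ℂ) - I * ((t : ℂ) + z))

/-- `α₋(z) = −e^{−2iφ}(k₂ + iz)(k₁ + i(t+z))`. -/
def alphaM (k₁ k₂ t φ : ℝ) (z : ℂ) : ℂ :=
  -Complex.exp (-2 * I * φ) * ((k₂ : ℂ) + I * z) * ((k₁ : ℂ) + I * ((t : ℂ) + z))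

/-- `β(z) = k₁(1−k₁) + k₂(1−k₂) − 2(t+z)z`. -/
def betaF (k₁ k₂ t : ℝ) (z : ℂ) : ℂ :=
  (k₁ : ℂ) * (1 - (k₁ : ℂ)) + (k₂ : ℂ) * (1 - (k₂ : ℂ)) - 2 * ((t : ℂ) + z) * z

/-- The difference operator `Λ`. -/
def Lam (k₁ k₂ t φ : ℝ) (g : ℂ → ℂ) (z : ℂ) : ℂ :=
  alphaP k₁ k₂ t φ z * g (z + I) + betaF k₁ k₂ t z * g z + alphaM k₁ k₂ t φ z * g (z - I)

/-- The measure `w(x) dx` on `ℝ`. -/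
def wMeasure (k₁ k₂ t φ : ℝ) : Measure ℝ :=
  volume.withDensity fun x : ℝ => ENNReal.ofReal ((wfun k₁ k₂ t φ (x : ℂ)).re)

theorem shift_line (f : ℂ → ℂ) (h : ℝ) (hh : 0 ≤ h) (g : ℝ → ℝ) (hg : Integrable g)
    (hg1 : Tendsto g atTop (𝓝 0)) (hg2 : Tendsto g atBot (𝓝 0))
    (hd : ∀ z : ℂ, 0 ≤ z.im → z.im ≤ h → DifferentiableAt ℂ f z)
    (hb : ∀ x y : ℝ, 0 ≤ y → y ≤ h → ‖f (x + y * I)‖ ≤ g x) :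
    ∫ x : ℝ, f x = ∫ x : ℝ, f (x + h * I) := by
  have hi : ∀ y : ℝ, 0 ≤ y → y ≤ h → Integrable (fun x : ℝ => f (x + y * I)) := by
    intro y hy hy'
    refine hg.mono' ?_ (Eventually.of_forall fun x => hb x y hy hy')
    refine Continuous.aestronglyMeasurable ?_
    rw [continuous_iff_continuousAt]
    intro x
    have := (hd (x + y * I) (by simpa using hy) (by simpa using hy')).continuousAt
    exact ContinuousAt.comp (f := fun x : ℝ => (x + y * I : ℂ)) this (by fun_prop)
  have h0 : Integrable (fun x : ℝ => f x) := by
    simpa using hi 0 le_rfl hh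
  have rect : ∀ T : ℝ, ((∫ x : ℝ in (-T)..T, f x) - ∫ x : ℝ in (-T)..T, f (x + h * I))
      = I • (∫ y : ℝ in (0:ℝ)..h, f (-T + y * I)) - I • (∫ y : ℝ in (0:ℝ)..h, f (T + y * I)) := by
    intro T
    have := Complex.integral_boundary_rect_eq_zero_of_differentiableOn f (-T) (T + h * I) ?_
    · simp at this
      simp
      linear_combination this
    · intro z hz
      rw [Complex.mem_reProdIm] at hz
      have h2 := hz.2
      simp [uIcc_of_le hh] at h2
      exact (hd z h2.1 h2.2).differentiableWithinAt
  have t1 := (intervalIntegral_tendsto_integral h0 tendsto_neg_atTop_atBot tendsto_id).sub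
    (intervalIntegral_tendsto_integral (hi h hh le_rfl) tendsto_neg_atTop_atBot tendsto_id)
  have key : ∀ u : ℝ → ℝ, Tendsto (fun T => g (u T)) atTop (𝓝 0) →
      Tendsto (fun T : ℝ => I • ∫ y : ℝ in (0:ℝ)..h, f (u T + y * I)) atTop (𝓝 0) := by
    intro u hu
    rw [show (0:ℂ) = I • (0:ℂ) by simp]
    refine Tendsto.const_smul ?_ _
    refine squeeze_zero_norm (a := fun T => g (u T) * |h - 0|) (fun T => ?_) (by simpa using hu.mul_const _)
    refine intervalIntegral.norm_integral_le_of_norm_le_const fun y hy => ?_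
    rw [uIoc_of_le hh] at hy
    exact hb _ _ hy.1.le hy.2
  have t2 := (key (fun T => -T) (hg2.comp tendsto_neg_atTop_atBot)).sub (key (fun T => T) hg1)
  rw [sub_zero] at t2
  have := tendsto_nhds_unique (t1.congr fun T => rect T) (by simpa using t2)
  exact sub_eq_zero.mp this

theorem int_exp_sub {E : Type*} [NormedAddCommGroup E] [NormedSpace ℝ E] (g : ℝ → E) :
    ∫ x in Ioi (0:ℝ), g x = ∫ x : ℝ, Real.exp x • g (Real.exp x) := by
  have := integral_image_eq_integral_abs_deriv_smul (s := univ) (f := Real.exp) (f' := Real.exp)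
    MeasurableSet.univ (fun x _ => (Real.hasDerivAt_exp x).hasDerivWithinAt)
    Real.exp_injective.injOn g
  simpa [image_univ, Real.range_exp, abs_of_pos (Real.exp_pos _)] using this

theorem integrable_exp_sub {E : Type*} [NormedAddCommGroup E] [NormedSpace ℝ E] (g : ℝ → E) :
    IntegrableOn g (Ioi (0:ℝ)) ↔ Integrable fun x : ℝ => Real.exp x • g (Real.exp x) := by
  have := integrableOn_image_iff_integrableOn_abs_deriv_smul (s := univ) (f := Real.exp) (f' := Real.exp)
    MeasurableSet.univ (fun x _ => (Real.hasDerivAt_exp x).hasDerivWithinAt)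
    Real.exp_injective.injOn g
  simpa [image_univ, Real.range_exp, abs_of_pos (Real.exp_pos _)] using this

theorem Gamma_bound (a : ℂ) (ha : 0 < a.re) (θ : ℝ) (h0 : 0 ≤ θ) (h1 : θ < Real.pi / 2) :
    ‖Complex.Gamma a‖ ≤ (1 / Real.cos θ) ^ a.re * Real.Gamma a.re * Real.exp (-θ * |a.im|) := by
  have hc : 0 < Real.cos θ := Real.cos_pos_of_mem_Ioo ⟨by linarith, h1⟩
  wlog him : 0 ≤ a.im generalizing a
  · have := this (conj a) (by simpa using ha) (by simp; linarith)
    rw [Complex.Gamma_conj] at this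
    simpa using this
  set c := Real.cos θ with hcdef
  set g : ℝ → ℝ := fun x => Real.exp (a.re * x - c * Real.exp x) with hgdef
  have hgeq : ∀ x, Real.exp x • ((Real.exp x) ^ (a.re - 1) * Real.exp (-(c * Real.exp x))) = g x := by
    intro x
    rw [hgdef, ← Real.exp_mul, smul_eq_mul, ← Real.exp_add, ← Real.exp_add]
    congr 1
    ring
  have hgi : Integrable g := by
    have := integrableOn_rpow_mul_exp_neg_mul_rpow (p := 1) (s := a.re - 1) (b := c) (by linarith)
      one_pos hc
    rw [integrable_exp_sub] at this
    refine this.congr (Eventually.of_forall fun x => ?_)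
    rw [← hgeq]
    simp
  have hgv : ∫ x, g x = (1 / c) ^ a.re * Real.Gamma a.re := by
    rw [← Real.integral_rpow_mul_exp_neg_mul_Ioi ha hc, int_exp_sub]
    exact integral_congr_ae (Eventually.of_forall fun x => (hgeq x).symm)
  set f : ℂ → ℂ := fun z => Complex.exp (a * z - Complex.exp z) with hfdef
  have hGf : Complex.Gamma a = ∫ x : ℝ, f x := by
    rw [Complex.Gamma_eq_integral ha, Complex.GammaIntegral, int_exp_sub]
    refine integral_congr_ae (Eventually.of_forall fun x => ?_)
    simp only [hfdef]
    rw [Complex.cpow_def_of_ne_zero (by simp [Complex.exp_ne_zero])]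
    rw [← Complex.ofReal_log (Real.exp_pos _).le, Real.log_exp, Complex.real_smul, Complex.ofReal_exp,
      Complex.ofReal_exp, ← Complex.exp_add, ← Complex.exp_add]
    congr 1
    push_cast
    ring
  have hnorm : ∀ x y : ℝ, ‖f (x + y * I)‖ = Real.exp (a.re * x - a.im * y - Real.exp x * Real.cos y) := by
    intro x y
    simp [hfdef, Complex.norm_exp, Complex.exp_re]
  have hsh := shift_line f θ h0 g hgi ?_ ?_ ?_ ?_
  · rw [hGf, hsh]
    refine (norm_integral_le_integral_norm _).trans ?_
    rw [← hgv, ← integral_mul_const]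
    refine le_of_eq (integral_congr_ae (Eventually.of_forall fun x => ?_))
    simp only [hnorm, hgdef]
    rw [← Real.exp_add, abs_of_nonneg him]
    congr 1
    rw [hcdef]; ring
  · have := (tendsto_rpow_mul_exp_neg_mul_atTop_nhds_zero a.re c hc).comp Real.tendsto_exp_atTop
    refine this.congr fun x => ?_
    simp only [Function.comp, hgdef]
    rw [← Real.exp_mul, ← Real.exp_add]
    congr 1
    ring
  · refine squeeze_zero (g := fun x => Real.exp (a.re * x)) (fun x => (Real.exp_pos _).le) (fun x => ?_) ?_
    · simp only [hgdef]
      apply Real.exp_le_exp.mpr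
      have := mul_pos hc (Real.exp_pos x)
      linarith
    · exact Real.tendsto_exp_atBot.comp (tendsto_id.const_mul_atBot ha)
  · intro z _ _
    simp only [hfdef]
    fun_prop
  · intro x y hy hy'
    rw [hnorm]
    simp only [hgdef]
    apply Real.exp_le_exp.mpr
    have h2 : c ≤ Real.cos y := Real.cos_le_cos_of_nonneg_of_le_pi hy (by linarith) hy'
    have h3 := mul_le_mul_of_nonneg_left h2 (Real.exp_pos x).le
    have h4 := mul_nonneg him hy
    linarith

theorem Gamma_bound' (k : ℝ) (hk : 0 < k) (θ : ℝ) (h0 : 0 ≤ θ) (h1 : θ < Real.pi / 2) :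
    ∃ C : ℝ, 0 < C ∧ ∀ a : ℂ, k ≤ a.re → a.re ≤ k + 1 →
      ‖Complex.Gamma a‖ ≤ C * Real.exp (-θ * |a.im|) := by
  have hc : 0 < Real.cos θ := Real.cos_pos_of_mem_Ioo ⟨by linarith, h1⟩
  have hcont : ContinuousOn (fun s : ℝ => (1 / Real.cos θ) ^ s * Real.Gamma s) (Icc k (k+1)) := by
    refine ContinuousOn.mul ?_ ?_
    · refine Continuous.continuousOn ?_
      exact Real.continuous_const_rpow (by positivity)
    · intro s hs
      refine (Real.differentiableAt_Gamma fun m => ?_).continuousAt.continuousWithinAt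
      have : (0:ℝ) ≤ m := Nat.cast_nonneg m
      have := hs.1
      linarith
  obtain ⟨C, hC⟩ := isCompact_Icc.exists_bound_of_continuousOn hcont
  refine ⟨max C 1, by positivity, fun a h2 h3 => ?_⟩
  refine (Gamma_bound a (by linarith) θ h0 h1).trans ?_
  gcongr
  exact (le_abs_self _).trans ((hC _ ⟨h2, h3⟩).trans (le_max_left _ _))

theorem poly_bound (δ : ℝ) (hδ : 0 < δ) (q : Polynomial ℂ) :
    ∃ C : ℝ, 0 < C ∧ ∀ z : ℂ, |z.im| ≤ 1 → ‖q.eval z‖ ≤ C * Real.exp (δ * |z.re|) := by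
  induction q using Polynomial.induction_on' with
  | add p q hp hq =>
    obtain ⟨C, h0, h⟩ := hp
    obtain ⟨D, h0', h'⟩ := hq
    refine ⟨C + D, by positivity, fun z hz => ?_⟩
    rw [Polynomial.eval_add, add_mul]
    exact (norm_add_le _ _).trans (add_le_add (h z hz) (h' z hz))
  | monomial n a =>
    refine ⟨(‖a‖ + 1) * (n.factorial / δ ^ n * Real.exp δ), by positivity, fun z hz => ?_⟩
    rw [Polynomial.eval_monomial, norm_mul, norm_pow, mul_assoc]
    have h1 : ‖z‖ ≤ |z.re| + 1 := (Complex.norm_le_abs_re_add_abs_im z).trans (by linarith)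
    have h2 := Real.pow_div_factorial_le_exp (δ * ‖z‖) (by positivity) n
    have h3 : ‖z‖ ^ n ≤ n.factorial / δ ^ n * Real.exp (δ * ‖z‖) := by
      rw [div_le_iff₀ (by positivity), mul_pow] at h2
      rw [div_mul_eq_mul_div, le_div_iff₀ (by positivity)]
      linarith
    have h4 : Real.exp (δ * ‖z‖) ≤ Real.exp δ * Real.exp (δ * |z.re|) := by
      rw [← Real.exp_add]
      apply Real.exp_le_exp.mpr
      nlinarith
    gcongr
    · linarith
    · refine h3.trans ?_
      rw [mul_assoc]
      gcongr

theorem integrable_exp_abs (δ : ℝ) (hδ : 0 < δ) : Integrable fun x : ℝ => Real.exp (-δ * |x|) := by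
  have h : IntegrableOn (fun x : ℝ => Real.exp (-δ * |x|)) (Ioi 0) := by
    refine (exp_neg_integrableOn_Ioi 0 hδ).congr_fun (fun x hx => ?_) measurableSet_Ioi
    simp only [abs_of_pos (mem_Ioi.mp hx)]
  have h' : IntegrableOn (fun x : ℝ => Real.exp (-δ * |x|)) (Iic 0) := by
    refine (integrableOn_exp_mul_Iic hδ 0).congr_fun (fun x hx => ?_) measurableSet_Iic
    simp only [abs_of_nonpos (mem_Iic.mp hx)]
    congr 1
    ring
  rw [← integrableOn_univ, ← Iic_union_Ioi (a := (0:ℝ))]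
  exact h'.union h

theorem tendsto_exp_abs (δ C : ℝ) (hδ : 0 < δ) :
    Tendsto (fun x : ℝ => C * Real.exp (-δ * |x|)) atTop (𝓝 0) ∧
    Tendsto (fun x : ℝ => C * Real.exp (-δ * |x|)) atBot (𝓝 0) := by
  have : Tendsto (fun x : ℝ => C * Real.exp (-δ * x)) atTop (𝓝 0) := by
    rw [← mul_zero C]
    refine Tendsto.const_mul C (Real.tendsto_exp_atBot.comp ?_)
    exact tendsto_id.const_mul_atTop_of_neg (by linarith)
  exact ⟨this.comp tendsto_abs_atTop_atTop, this.comp tendsto_abs_atBot_atTop⟩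


theorem memLp_exp (μ : Measure ℝ) (ε : ℝ) (hε : 0 < ε)
    (hμ : Integrable (fun x : ℝ => Real.exp (ε * |x|)) μ) :
    MemLp (fun x : ℝ => Real.exp (ε / 2 * |x|)) 2 μ := by
  rw [memLp_two_iff_integrable_sq (by fun_prop)]
  refine hμ.congr (Eventually.of_forall fun x => ?_)
  simp only [← Real.exp_nat_mul]
  congr 1
  push_cast
  ring

theorem isFinite_of_exp (μ : Measure ℝ) (ε : ℝ) (hε : 0 < ε)
    (hμ : Integrable (fun x : ℝ => Real.exp (ε * |x|)) μ) : IsFiniteMeasure μ := by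
  have : Integrable (fun _ : ℝ => (1:ℝ)) μ := by
    refine hμ.mono' (by fun_prop) (Eventually.of_forall fun x => ?_)
    simp only [norm_one]
    exact Real.one_le_exp (by positivity)
  simpa [integrable_const_iff] using this

theorem exp_int (μ : Measure ℝ) (ε : ℝ) (hε : 0 < ε)
    (hμ : Integrable (fun x : ℝ => Real.exp (ε * |x|)) μ) (g : ℝ → ℝ)
    (hgl : MemLp g 2 μ) (u : ℝ → ℂ) (hu : Measurable u)
    (D : ℝ) (hu' : ∀ x, ‖u x‖ ≤ D * Real.exp (ε / 2 * |x|)) :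
    Integrable (fun x => (g x : ℂ) * u x) μ := by
  have h1 := (memLp_exp μ ε hε hμ).integrable_mul hgl
  refine (h1.norm.const_mul D).mono' ?_ (Eventually.of_forall fun x => ?_)
  · exact (Complex.measurable_ofReal.comp_aemeasurable hgl.1.aemeasurable).aestronglyMeasurable.mul
      hu.aestronglyMeasurable
  · simp only [norm_mul, Pi.mul_apply, Complex.norm_real]
    rw [Real.norm_of_nonneg (Real.exp_pos _).le]
    calc _ ≤ ‖g x‖ * (D * Real.exp (ε / 2 * |x|)) := by gcongr; exact hu' x
      _ = _ := by ring

theorem exp_int_density (μ : Measure ℝ) (ε : ℝ) (hε : 0 < ε)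
    (hμ : Integrable (fun x : ℝ => Real.exp (ε * |x|)) μ) (g : ℝ → ℝ) (hgm : Measurable g)
    (hgl : MemLp g 2 μ) :
    IsFiniteMeasure (μ.withDensity fun x => ENNReal.ofReal (g x)) ∧
    ∀ z : ℂ, |z.re| < ε / 2 → z.re ∈ interior
      (ProbabilityTheory.integrableExpSet id (μ.withDensity fun x => ENNReal.ofReal (g x))) := by
  have hF : IsFiniteMeasure (μ.withDensity fun x => ENNReal.ofReal (g x)) := by
    have := isFinite_of_exp μ ε hε hμ
    exact isFiniteMeasure_withDensity_ofReal (hgl.integrable (by norm_num)).2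
  refine ⟨hF, fun z hz => ?_⟩
  have hsub : Ioo (-(ε / 2)) (ε / 2) ⊆ ProbabilityTheory.integrableExpSet id
      (μ.withDensity fun x => ENNReal.ofReal (g x)) := by
    intro s hs
    change Integrable _ _
    rw [integrable_withDensity_iff_integrable_smul' (by fun_prop) (by simp)]
    have h1 := (exp_int μ ε hε hμ g hgl (fun x => ((Real.exp (s * x) : ℝ) : ℂ)) (by fun_prop) 1 ?_).norm
    · refine h1.mono' ?_ (Eventually.of_forall fun x => ?_)
      · exact Measurable.aestronglyMeasurable (by fun_prop)
      · simp only [norm_mul, norm_smul, id, Complex.norm_real]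
        gcongr
        rw [ENNReal.toReal_ofReal', Real.norm_of_nonneg (le_max_right _ _)]
        exact max_le (le_abs_self _) (norm_nonneg _)
    · intro x
      rw [Complex.norm_real, Real.norm_of_nonneg (Real.exp_pos _).le, one_mul]
      apply Real.exp_le_exp.mpr
      have : |s| ≤ ε / 2 := abs_le.mpr ⟨hs.1.le, hs.2.le⟩
      calc s * x ≤ |s * x| := le_abs_self _
        _ = |s| * |x| := abs_mul _ _
        _ ≤ _ := by gcongr
  exact interior_maximal hsub isOpen_Ioo (abs_lt.mp hz)

theorem pow_le_exp (ε : ℝ) (hε : 0 < ε) (n : ℕ) : ∃ D : ℝ, ∀ x : ℝ,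
    ‖(x : ℂ) ^ n‖ ≤ D * Real.exp (ε / 2 * |x|) := by
  refine ⟨n.factorial / (ε / 2) ^ n, fun x => ?_⟩
  have h2 := Real.pow_div_factorial_le_exp (ε / 2 * |x|) (by positivity) n
  rw [div_le_iff₀ (by positivity), mul_pow] at h2
  rw [div_mul_eq_mul_div, le_div_iff₀ (by positivity), norm_pow, Complex.norm_real, Real.norm_eq_abs]
  linarith

theorem eventuallyEq_of_iteratedDeriv (f g : ℂ → ℂ) (z : ℂ) (hf : AnalyticAt ℂ f z)
    (hg : AnalyticAt ℂ g z) (h : ∀ n, iteratedDeriv n f z = iteratedDeriv n g z) : f =ᶠ[𝓝 z] g := by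
  have h1 := hf.hasFPowerSeriesAt
  have h2 := hg.hasFPowerSeriesAt
  simp only [h] at h1
  have e1 := h1.eventually_hasSum_sub
  have e2 := h2.eventually_hasSum_sub
  filter_upwards [e1, e2] with y hy1 hy2 using hy1.unique hy2

theorem real_zero (μ : Measure ℝ) (ε : ℝ) (hε : 0 < ε)
    (hμ : Integrable (fun x : ℝ => Real.exp (ε * |x|)) μ) (g : ℝ → ℝ) (hgm : Measurable g)
    (hgl : MemLp g 2 μ) (h0 : ∀ n : ℕ, ∫ x, (g x : ℂ) * (x : ℂ) ^ n ∂μ = 0) : g =ᵐ[μ] 0 := by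
  have hfin := isFinite_of_exp μ ε hε hμ
  set ν₁ := μ.withDensity fun x => ENNReal.ofReal (g x) with hν₁
  set ν₂ := μ.withDensity fun x => ENNReal.ofReal ((-g) x) with hν₂
  obtain ⟨f1, i1⟩ := exp_int_density μ ε hε hμ g hgm hgl
  obtain ⟨f2, i2⟩ := exp_int_density μ ε hε hμ (-g) hgm.neg hgl.neg
  rw [← hν₁] at f1 i1
  rw [← hν₂] at f2 i2
  have hU : IsPreconnected {z : ℂ | |z.re| < ε / 2} := by
    have : {z : ℂ | |z.re| < ε / 2} = Complex.reLm ⁻¹' (Ioo (-(ε/2)) (ε/2)) := by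
      ext z; simp [abs_lt]
    rw [this]
    exact ((convex_Ioo _ _).linear_preimage Complex.reLm).isPreconnected
  have h00 : (0:ℂ) ∈ {z : ℂ | |z.re| < ε / 2} := by simp; positivity
  have mom : ∀ n : ℕ, ∫ x : ℝ, (x : ℂ) ^ n ∂ν₁ = ∫ x : ℝ, (x : ℂ) ^ n ∂ν₂ := by
    intro n
    obtain ⟨D, hD⟩ := pow_le_exp ε hε n
    have hi := exp_int μ ε hε hμ g hgl (fun x => (x : ℂ) ^ n) (by fun_prop) D hD
    rw [hν₁, hν₂, integral_withDensity_eq_integral_toReal_smul (by fun_prop) (by simp),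
      integral_withDensity_eq_integral_toReal_smul (by fun_prop) (by simp), ← sub_eq_zero,
      ← integral_sub]
    · rw [← h0 n]
      congr 1 with x
      rw [← sub_smul, ENNReal.toReal_ofReal', ENNReal.toReal_ofReal', Complex.real_smul, Pi.neg_apply,
        max_zero_sub_max_neg_zero_eq_self]
    · refine hi.mono (Measurable.aestronglyMeasurable (by fun_prop)) (Eventually.of_forall fun x => ?_)
      rw [norm_smul, norm_mul, Complex.norm_real]
      gcongr
      rw [ENNReal.toReal_ofReal', Real.norm_of_nonneg (le_max_right _ _)]
      exact max_le (le_abs_self _) (norm_nonneg _)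
    · refine hi.mono (Measurable.aestronglyMeasurable (by fun_prop)) (Eventually.of_forall fun x => ?_)
      rw [norm_smul, norm_mul, Complex.norm_real]
      gcongr
      rw [ENNReal.toReal_ofReal', Real.norm_of_nonneg (le_max_right _ _)]
      exact max_le (neg_le_abs _) (norm_nonneg _)
  have a1 : AnalyticOnNhd ℂ (ProbabilityTheory.complexMGF id ν₁) {z : ℂ | |z.re| < ε / 2} :=
    fun z hz => ProbabilityTheory.analyticAt_complexMGF (i1 z hz)
  have a2 : AnalyticOnNhd ℂ (ProbabilityTheory.complexMGF id ν₂) {z : ℂ | |z.re| < ε / 2} :=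
    fun z hz => ProbabilityTheory.analyticAt_complexMGF (i2 z hz)
  have heq := a1.eqOn_of_preconnected_of_eventuallyEq a2 hU h00
    (eventuallyEq_of_iteratedDeriv _ _ _ (a1 0 h00) (a2 0 h00) fun n => by
      rw [ProbabilityTheory.iteratedDeriv_complexMGF (i1 0 h00),
        ProbabilityTheory.iteratedDeriv_complexMGF (i2 0 h00)]
      simpa using mom n)
  have hν : ν₁ = ν₂ := by
    apply Measure.ext_of_charFun
    ext s
    rw [← ProbabilityTheory.complexMGF_id_mul_I, ← ProbabilityTheory.complexMGF_id_mul_I]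
    apply heq
    simp
    positivity
  rw [hν₁, hν₂, withDensity_eq_iff_of_sigmaFinite (by fun_prop) (by fun_prop)] at hν
  filter_upwards [hν] with x hx
  have := congrArg ENNReal.toReal hx
  rw [ENNReal.toReal_ofReal', ENNReal.toReal_ofReal'] at this
  have h3 := max_zero_sub_max_neg_zero_eq_self (g x)
  simp only [Pi.neg_apply] at this
  simp only [Pi.zero_apply]
  linarith

theorem dense_poly (μ : Measure ℝ) (ε : ℝ) (hε : 0 < ε)
    (hμ : Integrable (fun x : ℝ => Real.exp (ε * |x|)) μ) :
    Dense {u : Lp ℂ 2 μ | ∃ q : Polynomial ℂ, ∀ᵐ x ∂μ, u x = q.eval (x : ℂ)} := by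
  let S : Submodule ℂ (Lp ℂ 2 μ) :=
    { carrier := {u : Lp ℂ 2 μ | ∃ q : Polynomial ℂ, ∀ᵐ x ∂μ, u x = q.eval (x : ℂ)}
      add_mem' := by
        rintro u v ⟨p, hp⟩ ⟨q, hq⟩
        refine ⟨p + q, ?_⟩
        filter_upwards [hp, hq, Lp.coeFn_add u v] with x h1 h2 h3
        rw [h3, Pi.add_apply, h1, h2, Polynomial.eval_add]
      zero_mem' := by
        refine ⟨0, ?_⟩
        filter_upwards [Lp.coeFn_zero ℂ 2 μ] with x h1
        rw [h1]; simp
      smul_mem' := by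
        rintro c u ⟨p, hp⟩
        refine ⟨c • p, ?_⟩
        filter_upwards [hp, Lp.coeFn_smul c u] with x h1 h2
        rw [h2, Pi.smul_apply, h1, Polynomial.eval_smul] }
  change Dense (S : Set (Lp ℂ 2 μ))
  rw [Submodule.dense_iff_topologicalClosure_eq_top, Submodule.topologicalClosure_eq_top_iff,
    Submodule.eq_bot_iff]
  intro f hf
  rw [Submodule.mem_orthogonal] at hf
  have hfl : MemLp f 2 μ := Lp.memLp f
  have hfm : Measurable f := (Lp.stronglyMeasurable f).measurable
  have hre : MemLp (fun x => (f x).re) 2 μ := hfl.re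
  have him : MemLp (fun x => (f x).im) 2 μ := hfl.im
  have main : ∀ n : ℕ, (∫ x, ((f x).re : ℂ) * (x : ℂ) ^ n ∂μ = 0) ∧
      (∫ x, ((f x).im : ℂ) * (x : ℂ) ^ n ∂μ = 0) := by
    intro n
    obtain ⟨D, hD⟩ := pow_le_exp ε hε n
    have hxl : MemLp (fun x : ℝ => (x : ℂ) ^ n) 2 μ := by
      refine ((memLp_exp μ ε hε hμ).const_mul D).mono (Measurable.aestronglyMeasurable (by fun_prop))
        (Eventually.of_forall fun x => ?_)
      exact (hD x).trans (le_abs_self _)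
    have h1 := hf (hxl.toLp _) ⟨Polynomial.X ^ n, by
      filter_upwards [hxl.coeFn_toLp] with x hx
      rw [hx]; simp⟩
    rw [L2.inner_def] at h1
    have h2 : ∫ x, f x * (x : ℂ) ^ n ∂μ = 0 := by
      rw [← h1]
      refine integral_congr_ae ?_
      filter_upwards [hxl.coeFn_toLp] with x hx
      rw [hx]
      simp
    have i0 : Integrable (fun x => f x * (x : ℂ) ^ n) μ := hfl.integrable_mul hxl
    have i1 := exp_int μ ε hε hμ _ hre (fun x => (x : ℂ) ^ n) (by fun_prop) D hD
    have i2 := exp_int μ ε hε hμ _ him (fun x => (x : ℂ) ^ n) (by fun_prop) D hD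
    have r1 : ∀ x : ℝ, ((f x).re : ℂ) * (x : ℂ) ^ n = (((f x * (x : ℂ) ^ n).re : ℝ) : ℂ) := by
      intro x
      rw [← Complex.ofReal_pow, Complex.re_mul_ofReal]; push_cast; rfl
    have r2 : ∀ x : ℝ, ((f x).im : ℂ) * (x : ℂ) ^ n = (((f x * (x : ℂ) ^ n).im : ℝ) : ℂ) := by
      intro x
      rw [← Complex.ofReal_pow, Complex.im_mul_ofReal]; push_cast; rfl
    constructor
    · simp_rw [r1]
      rw [integral_complex_ofReal]
      have := integral_re (𝕜 := ℂ) i0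
      simp only [RCLike.re_to_complex] at this
      rw [this, h2]; simp
    · simp_rw [r2]
      rw [integral_complex_ofReal]
      have := integral_im (𝕜 := ℂ) i0
      simp only [RCLike.im_to_complex] at this
      rw [this, h2]; simp
  have z1 := real_zero μ ε hε hμ _ (by fun_prop) hre fun n => (main n).1
  have z2 := real_zero μ ε hε hμ _ (by fun_prop) him fun n => (main n).2
  rw [Lp.eq_zero_iff_ae_eq_zero]
  filter_upwards [z1, z2] with x h1 h2
  exact Complex.ext h1 h2

theorem weight_bound (k₁ k₂ : ℝ) (hk₁ : 0 < k₁) (hk₂ : 0 < k₂) (t φ : ℝ)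
    (ε : ℝ) (hε0 : 0 < ε) (hε : ε < min (4 * φ) (4 * (Real.pi - φ))) :
    ∃ C : ℝ, 0 < C ∧ ∀ (x : ℝ) (E a₁ a₂ a₃ a₄ : ℂ), E.re = (2 * x + t) * (2 * φ - Real.pi) →
      k₁ ≤ a₁.re → a₁.re ≤ k₁ + 1 → k₁ ≤ a₂.re → a₂.re ≤ k₁ + 1 →
      k₂ ≤ a₃.re → a₃.re ≤ k₂ + 1 → k₂ ≤ a₄.re → a₄.re ≤ k₂ + 1 →
      a₁.im = t + x → a₂.im = -(t + x) → a₃.im = x → a₄.im = -x →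
      ‖Complex.exp E * Complex.Gamma a₁ * Complex.Gamma a₂ * Complex.Gamma a₃ * Complex.Gamma a₄‖
        ≤ C * Real.exp (-ε * |x|) := by
  obtain ⟨hε1, hε2⟩ := lt_min_iff.mp hε
  obtain ⟨θ, hθ0, hθ1, hθ2, hθ3⟩ : ∃ θ : ℝ, 0 ≤ θ ∧ θ < Real.pi / 2 ∧
      ε + 2 * (2 * φ - Real.pi) ≤ 4 * θ ∧ ε - 2 * (2 * φ - Real.pi) ≤ 4 * θ := by
    refine ⟨max 0 (max ((ε + 2 * (2 * φ - Real.pi)) / 4) ((ε - 2 * (2 * φ - Real.pi)) / 4)),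
      le_max_left _ _, ?_, ?_, ?_⟩
    · refine max_lt (by positivity) (max_lt (by linarith) (by linarith))
    · have := (le_max_left ((ε + 2 * (2 * φ - Real.pi)) / 4) ((ε - 2 * (2 * φ - Real.pi)) / 4)).trans
        (le_max_right 0 _)
      linarith
    · have := (le_max_right ((ε + 2 * (2 * φ - Real.pi)) / 4) ((ε - 2 * (2 * φ - Real.pi)) / 4)).trans
        (le_max_right 0 _)
      linarith
  obtain ⟨C₁, hC₁, b₁⟩ := Gamma_bound' k₁ hk₁ θ hθ0 hθ1
  obtain ⟨C₂, hC₂, b₂⟩ := Gamma_bound' k₂ hk₂ θ hθ0 hθ1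
  refine ⟨Real.exp (t * (2 * φ - Real.pi) + 2 * θ * |t|) * C₁ * C₁ * C₂ * C₂, by positivity, ?_⟩
  intro x E a₁ a₂ a₃ a₄ hE h1 h2 h3 h4 h5 h6 h7 h8 m1 m2 m3 m4
  have g1 := b₁ a₁ h1 h2
  have g2 := b₁ a₂ h3 h4
  have g3 := b₂ a₃ h5 h6
  have g4 := b₂ a₄ h7 h8
  rw [m1] at g1
  rw [m2, abs_neg] at g2
  rw [m3] at g3
  rw [m4, abs_neg] at g4
  rw [norm_mul, norm_mul, norm_mul, norm_mul, Complex.norm_exp, hE]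
  calc _ ≤ Real.exp ((2 * x + t) * (2 * φ - Real.pi)) * (C₁ * Real.exp (-θ * |t + x|)) *
        (C₁ * Real.exp (-θ * |t + x|)) * (C₂ * Real.exp (-θ * |x|)) * (C₂ * Real.exp (-θ * |x|)) := by
        gcongr
    _ = C₁ * C₁ * C₂ * C₂ * Real.exp ((2 * x + t) * (2 * φ - Real.pi) + -θ * |t + x| + -θ * |t + x|
        + -θ * |x| + -θ * |x|) := by
        simp only [Real.exp_add]; ring
    _ ≤ C₁ * C₁ * C₂ * C₂ * Real.exp (t * (2 * φ - Real.pi) + 2 * θ * |t| + -ε * |x|) := by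
        gcongr ?_ * Real.exp ?_
        have e1 : |x| ≤ |t + x| + |t| := by
          have := abs_sub (t + x) t
          simpa using this
        have e2 := mul_le_mul_of_nonneg_left e1 hθ0
        rcases le_total 0 x with hx | hx
        · rw [abs_of_nonneg hx] at *
          nlinarith
        · rw [abs_of_nonpos hx] at *
          nlinarith
    _ = _ := by
        simp only [Real.exp_add]; ring

theorem wfun_bound (k₁ k₂ : ℝ) (hk₁ : 0 < k₁) (hk₂ : 0 < k₂) (t φ : ℝ)
    (ε : ℝ) (hε0 : 0 < ε) (hε : ε < min (4 * φ) (4 * (Real.pi - φ))) :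
    ∃ C : ℝ, 0 < C ∧ ∀ x : ℝ, ‖wfun k₁ k₂ t φ x‖ ≤ C * Real.exp (-ε * |x|) := by
  obtain ⟨C, hC, h⟩ := weight_bound k₁ k₂ hk₁ hk₂ t φ ε hε0 hε
  refine ⟨1 / (2 * Real.pi) * C, by positivity, fun x => ?_⟩
  have := h x ((2 * x + (t : ℂ)) * (2 * (φ : ℂ) - (Real.pi : ℂ))) ((k₁ : ℂ) + I * t + I * x)
    ((k₁ : ℂ) - I * t - I * x) ((k₂ : ℂ) + I * x) ((k₂ : ℂ) - I * x) (by simp) (by simp) (by simp)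
    (by simp) (by simp) (by simp) (by simp) (by simp) (by simp) (by simp) (by simp; ring) (by simp)
    (by simp)
  rw [wfun, mul_assoc, mul_assoc, mul_assoc, mul_assoc, norm_mul, Complex.norm_real,
    Real.norm_of_nonneg (by positivity), mul_assoc (1 / (2 * Real.pi))]
  simp only [mul_assoc] at this ⊢
  gcongr

theorem Gamma_diff (a : ℂ) (ha : 0 < a.re) : DifferentiableAt ℂ Complex.Gamma a := by
  refine Complex.differentiableAt_Gamma a fun m h => ?_
  rw [h] at ha
  simp at ha
  have : (0:ℝ) ≤ m := Nat.cast_nonneg m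
  linarith

theorem wfun_cont (k₁ k₂ : ℝ) (hk₁ : 0 < k₁) (hk₂ : 0 < k₂) (t φ : ℝ) :
    Continuous fun x : ℝ => wfun k₁ k₂ t φ x := by
  have aux : ∀ k : ℝ, 0 < k → ∀ u : ℝ → ℂ, Continuous u → (∀ x, (u x).re = k) →
      Continuous fun x => Complex.Gamma (u x) := by
    intro k hk u hu h
    rw [continuous_iff_continuousAt]
    intro x
    exact ContinuousAt.comp (f := u) (Gamma_diff (u x) (by rw [h]; exact hk)).continuousAt hu.continuousAt
  unfold wfun
  have c1 := aux k₁ hk₁ (fun x : ℝ => (k₁ : ℂ) + I * t + I * x) (by fun_prop) (by intro x; simp)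
  have c2 := aux k₁ hk₁ (fun x : ℝ => (k₁ : ℂ) - I * t - I * x) (by fun_prop) (by intro x; simp)
  have c3 := aux k₂ hk₂ (fun x : ℝ => (k₂ : ℂ) + I * x) (by fun_prop) (by intro x; simp)
  have c4 := aux k₂ hk₂ (fun x : ℝ => (k₂ : ℂ) - I * x) (by fun_prop) (by intro x; simp)
  refine Continuous.mul (Continuous.mul (Continuous.mul (Continuous.mul ?_ c1) c2) c3) c4
  fun_prop

theorem exp_moment (k₁ k₂ : ℝ) (hk₁ : 0 < k₁) (hk₂ : 0 < k₂) (t φ : ℝ)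
    (ε : ℝ) (hε0 : 0 < ε) (hε : ε < min (4 * φ) (4 * (Real.pi - φ))) :
    Integrable (fun x : ℝ => Real.exp (ε * |x|) * (wfun k₁ k₂ t φ (x : ℂ)).re) := by
  obtain ⟨ε', h1, h2⟩ := exists_between hε
  obtain ⟨C, hC, h⟩ := wfun_bound k₁ k₂ hk₁ hk₂ t φ ε' (hε0.trans h1) h2
  refine ((integrable_exp_abs (ε' - ε) (by linarith)).const_mul C).mono' ?_
    (Eventually.of_forall fun x => ?_)
  · have := wfun_cont k₁ k₂ hk₁ hk₂ t φ
    have h3 := Complex.continuous_re.comp this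
    have h4 : Continuous fun x : ℝ => Real.exp (ε * |x|) := by fun_prop
    exact (h4.mul h3).aestronglyMeasurable
  · rw [norm_mul, Real.norm_of_nonneg (Real.exp_pos _).le]
    calc _ ≤ Real.exp (ε * |x|) * (C * Real.exp (-ε' * |x|)) := by
          gcongr
          exact (Complex.abs_re_le_norm _).trans (h x)
      _ = C * (Real.exp (ε * |x|) * Real.exp (-ε' * |x|)) := by ring
      _ = _ := by rw [← Real.exp_add]; congr 2; ring

theorem poly_int (k₁ k₂ : ℝ) (hk₁ : 0 < k₁) (hk₂ : 0 < k₂) (t φ : ℝ) (hφ₀ : 0 < φ)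
    (hφπ : φ < Real.pi) (P : Polynomial ℂ) :
    Integrable (fun x : ℝ => P.eval (x : ℂ) * wfun k₁ k₂ t φ (x : ℂ)) := by
  obtain ⟨ε, h1, h2⟩ := exists_between (show 0 < min (4 * φ) (4 * (Real.pi - φ)) from
    lt_min (by linarith) (by linarith))
  obtain ⟨C, hC, h⟩ := wfun_bound k₁ k₂ hk₁ hk₂ t φ ε h1 h2
  obtain ⟨D, hD, h'⟩ := poly_bound (ε / 2) (by linarith) P
  refine ((integrable_exp_abs (ε / 2) (by linarith)).const_mul (D * C)).mono' ?_
    (Eventually.of_forall fun x => ?_)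
  · have := wfun_cont k₁ k₂ hk₁ hk₂ t φ
    have h2 : Continuous fun x : ℝ => P.eval (x : ℂ) := P.continuous.comp Complex.continuous_ofReal
    exact Continuous.aestronglyMeasurable (by fun_prop)
  · rw [norm_mul]
    have := h' x (by simp)
    rw [Complex.ofReal_re] at this
    calc _ ≤ (D * Real.exp (ε / 2 * |x|)) * (C * Real.exp (-ε * |x|)) := by
          gcongr
          exact h x
      _ = D * C * (Real.exp (ε / 2 * |x|) * Real.exp (-ε * |x|)) := by ring
      _ = _ := by rw [← Real.exp_add]; congr 2; ring

theorem shift_w (k₁ k₂ : ℝ) (hk₁ : 0 < k₁) (hk₂ : 0 < k₂) (t φ : ℝ) (hφ₀ : 0 < φ)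
    (hφπ : φ < Real.pi) (P : Polynomial ℂ) :
    ∫ x : ℝ, alphaM k₁ k₂ t φ x * P.eval (x : ℂ) * wfun k₁ k₂ t φ (x : ℂ) =
    ∫ x : ℝ, alphaP k₁ k₂ t φ x * P.eval ((x : ℂ) + I) * wfun k₁ k₂ t φ (x : ℂ) := by
  obtain ⟨ε, h1, h2⟩ := exists_between (show 0 < min (4 * φ) (4 * (Real.pi - φ)) from
    lt_min (by linarith) (by linarith))
  obtain ⟨C, hC, h⟩ := weight_bound k₁ k₂ hk₁ hk₂ t φ ε h1 h2
  set Q : Polynomial ℂ := Polynomial.C (-Complex.exp (-2 * I * φ) * ((1 / (2 * Real.pi) : ℝ) : ℂ)) * P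
    with hQ
  have hQe : ∀ z, Q.eval z = -Complex.exp (-2 * I * φ) * ((1 / (2 * Real.pi) : ℝ) : ℂ) * P.eval z := by
    intro z; simp [hQ]
  obtain ⟨D, hD, h'⟩ := poly_bound (ε / 2) (by linarith) Q
  set G : ℂ → ℂ := fun z => Q.eval z *
    (Complex.exp ((2 * z + (t : ℂ)) * (2 * (φ : ℂ) - (Real.pi : ℂ))) *
    Complex.Gamma ((k₁ : ℂ) + I * t + I * z + 1) * Complex.Gamma ((k₁ : ℂ) - I * t - I * z) *
    Complex.Gamma ((k₂ : ℂ) + I * z + 1) * Complex.Gamma ((k₂ : ℂ) - I * z)) with hG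
  have key := shift_line G 1 zero_le_one (fun x => D * C * Real.exp (-(ε / 2) * |x|))
    ((integrable_exp_abs (ε / 2) (by linarith)).const_mul (D * C))
    (tendsto_exp_abs (ε / 2) (D * C) (by linarith)).1
    (tendsto_exp_abs (ε / 2) (D * C) (by linarith)).2 ?_ ?_
  · have l1 : ∀ x : ℝ, alphaM k₁ k₂ t φ x * P.eval (x : ℂ) * wfun k₁ k₂ t φ (x : ℂ) = G x := by
      intro x
      simp only [hG, hQe, alphaM, wfun]
      rw [Complex.Gamma_add_one ((k₁ : ℂ) + I * t + I * x), Complex.Gamma_add_one ((k₂ : ℂ) + I * x)]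
      · ring
      · intro h; have := congrArg Complex.re h; simp at this; linarith
      · intro h; have := congrArg Complex.re h; simp at this; linarith
    have l2 : ∀ x : ℝ, alphaP k₁ k₂ t φ x * P.eval ((x : ℂ) + I) * wfun k₁ k₂ t φ (x : ℂ)
        = G (x + (1 : ℝ) * I) := by
      intro x
      simp only [hG, hQe, alphaP, wfun]
      have e1 : (k₁ : ℂ) + I * t + I * (x + (1 : ℝ) * I) + 1 = (k₁ : ℂ) + I * t + I * x := by
        push_cast; linear_combination Complex.I_mul_I
      have e2 : (k₁ : ℂ) - I * t - I * (x + (1 : ℝ) * I) = ((k₁ : ℂ) - I * t - I * x) + 1 := by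
        push_cast; linear_combination -Complex.I_mul_I
      have e3 : (k₂ : ℂ) + I * (x + (1 : ℝ) * I) + 1 = (k₂ : ℂ) + I * x := by
        push_cast; linear_combination Complex.I_mul_I
      have e4 : (k₂ : ℂ) - I * (x + (1 : ℝ) * I) = ((k₂ : ℂ) - I * x) + 1 := by
        push_cast; linear_combination -Complex.I_mul_I
      have e5 : (2 * ((x : ℂ) + (1 : ℝ) * I) + (t : ℂ)) * (2 * (φ : ℂ) - (Real.pi : ℂ)) =
          (2 * (x : ℂ) + (t : ℂ)) * (2 * (φ : ℂ) - (Real.pi : ℂ)) + 2 * I * φ + 2 * I * φ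
           - 2 * Real.pi * I := by
        push_cast; ring
      rw [e1, e2, e3, e4, e5, Complex.exp_sub, Complex.exp_two_pi_mul_I, Complex.exp_add,
        Complex.exp_add, Complex.Gamma_add_one, Complex.Gamma_add_one]
      · have e6 : Complex.exp (-2 * I * φ) * Complex.exp (2 * I * φ) = 1 := by
          rw [← Complex.exp_add, ← Complex.exp_zero]; congr 1; ring
        have e7 : (x : ℂ) + (1 : ℝ) * I = x + I := by push_cast; ring
        rw [e7]
        generalize Complex.exp (-2 * I * φ) = A at *
        generalize Complex.exp (2 * I * φ) = B at *
        generalize Complex.exp ((2 * (x : ℂ) + (t : ℂ)) * (2 * (φ : ℂ) - (Real.pi : ℂ))) = E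
        generalize Complex.Gamma ((k₁ : ℂ) + I * t + I * x) = G1
        generalize Complex.Gamma ((k₁ : ℂ) - I * t - I * x) = G2
        generalize Complex.Gamma ((k₂ : ℂ) + I * x) = G3
        generalize Complex.Gamma ((k₂ : ℂ) - I * x) = G4
        generalize (((1 / (2 * Real.pi) : ℝ)) : ℂ) = c
        generalize P.eval ((x : ℂ) + I) = p
        linear_combination (B * ((k₂ : ℂ) - I * x) * ((k₁ : ℂ) - I * (t + x)) * p * c * E * G1 * G2 * G3 * G4) * e6
      · intro h; have := congrArg Complex.re h; simp at this; linarith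
      · intro h; have := congrArg Complex.re h; simp at this; linarith
    simp_rw [l1, l2]
    exact key
  · intro z hz0 hz1
    have d1 : DifferentiableAt ℂ (fun z : ℂ => Complex.Gamma ((k₁ : ℂ) + I * t + I * z + 1)) z :=
      DifferentiableAt.comp z (f := fun z : ℂ => (k₁ : ℂ) + I * t + I * z + 1)
        (Gamma_diff _ (by simp; linarith)) (by fun_prop)
    have d2 : DifferentiableAt ℂ (fun z : ℂ => Complex.Gamma ((k₁ : ℂ) - I * t - I * z)) z :=
      DifferentiableAt.comp z (f := fun z : ℂ => (k₁ : ℂ) - I * t - I * z)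
        (Gamma_diff _ (by simp; linarith)) (by fun_prop)
    have d3 : DifferentiableAt ℂ (fun z : ℂ => Complex.Gamma ((k₂ : ℂ) + I * z + 1)) z :=
      DifferentiableAt.comp z (f := fun z : ℂ => (k₂ : ℂ) + I * z + 1)
        (Gamma_diff _ (by simp; linarith)) (by fun_prop)
    have d4 : DifferentiableAt ℂ (fun z : ℂ => Complex.Gamma ((k₂ : ℂ) - I * z)) z :=
      DifferentiableAt.comp z (f := fun z : ℂ => (k₂ : ℂ) - I * z)
        (Gamma_diff _ (by simp; linarith)) (by fun_prop)
    have dq : DifferentiableAt ℂ (fun z : ℂ => Q.eval z) z := Q.differentiableAt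
    have de : DifferentiableAt ℂ (fun z : ℂ => Complex.exp ((2 * z + (t : ℂ)) * (2 * (φ : ℂ) - (Real.pi : ℂ)))) z := by
      fun_prop
    exact dq.mul ((((de.mul d1).mul d2).mul d3).mul d4)
  · intro x y hy0 hy1
    simp only [hG]
    rw [norm_mul]
    have b1 := h' (x + y * I) (by simp [abs_of_nonneg hy0, hy1])
    have b2 := h x ((2 * (x + y * I) + (t : ℂ)) * (2 * (φ : ℂ) - (Real.pi : ℂ)))
      ((k₁ : ℂ) + I * t + I * (x + y * I) + 1) ((k₁ : ℂ) - I * t - I * (x + y * I))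
      ((k₂ : ℂ) + I * (x + y * I) + 1) ((k₂ : ℂ) - I * (x + y * I))
      (by simp) (by simp; linarith) (by simp; linarith) (by simp; linarith) (by simp; linarith)
      (by simp; linarith) (by simp; linarith) (by simp; linarith) (by simp; linarith)
      (by simp) (by simp; ring) (by simp) (by simp)
    simp only [Complex.add_re, Complex.ofReal_re, Complex.mul_re, Complex.I_re, Complex.I_im,
      Complex.ofReal_im, mul_zero, zero_mul, mul_one, sub_zero, add_zero] at b1
    calc _ ≤ (D * Real.exp (ε / 2 * |x|)) * (C * Real.exp (-ε * |x|)) := by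
          gcongr
      _ = D * C * (Real.exp (ε / 2 * |x|) * Real.exp (-ε * |x|)) := by ring
      _ = _ := by rw [← Real.exp_add]; congr 2; ring

theorem dense_w (k₁ k₂ : ℝ) (hk₁ : 0 < k₁) (hk₂ : 0 < k₂) (t φ : ℝ) (hφ₀ : 0 < φ)
    (hφπ : φ < Real.pi) :
    Dense {u : Lp ℂ 2 (wMeasure k₁ k₂ t φ) |
      ∃ q : Polynomial ℂ, ∀ᵐ x ∂(wMeasure k₁ k₂ t φ), u x = q.eval (x : ℂ)} := by
  obtain ⟨ε, h1, h2⟩ := exists_between (show 0 < min (4 * φ) (4 * (Real.pi - φ)) from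
    lt_min (by linarith) (by linarith))
  refine dense_poly _ ε h1 ?_
  have hc := wfun_cont k₁ k₂ hk₁ hk₂ t φ
  have hm : Measurable fun x : ℝ => (wfun k₁ k₂ t φ (x : ℂ)).re :=
    (Complex.continuous_re.comp hc).measurable
  unfold wMeasure
  rw [integrable_withDensity_iff_integrable_smul' (by fun_prop) (by simp)]
  refine (exp_moment k₁ k₂ hk₁ hk₂ t φ ε h1 h2).mono (Measurable.aestronglyMeasurable (by fun_prop))
    (Eventually.of_forall fun x => ?_)
  rw [norm_smul, norm_mul, mul_comm]
  gcongr
  rw [ENNReal.toReal_ofReal', Real.norm_of_nonneg (le_max_right _ _)]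
  exact max_le (le_abs_self _) (norm_nonneg _)

theorem conj_eval (r : Polynomial ℂ) (z : ℂ) :
    conj (r.eval z) = (r.map (starRingEnd ℂ)).eval (conj z) := by
  rw [Polynomial.eval_map, Polynomial.eval₂_hom]

theorem sym_w (k₁ k₂ : ℝ) (hk₁ : 0 < k₁) (hk₂ : 0 < k₂) (t φ : ℝ) (hφ₀ : 0 < φ)
    (hφπ : φ < Real.pi) (q r : Polynomial ℂ) :
      (∫ x : ℝ, Lam k₁ k₂ t φ (fun z => q.eval z) (x : ℂ) * conj (r.eval (x : ℂ)) *
          wfun k₁ k₂ t φ (x : ℂ)) =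
      ∫ x : ℝ, q.eval (x : ℂ) * conj (Lam k₁ k₂ t φ (fun z => r.eval z) (x : ℂ)) *
          wfun k₁ k₂ t φ (x : ℂ) := by
  set s := r.map (starRingEnd ℂ) with hs
  have c2' : conj (2 : ℂ) = 2 := Complex.conj_ofNat 2
  have cI : conj I = -I := Complex.conj_I
  have hsum : ∀ A B A' : ℝ → ℂ, ∀ P Q R : Polynomial ℂ,
      (∀ x : ℝ, A x = P.eval (x : ℂ)) → (∀ x : ℝ, B x = Q.eval (x : ℂ)) →
      (∀ x : ℝ, A' x = R.eval (x : ℂ)) →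
      ∫ x : ℝ, (A x + B x + A' x) * wfun k₁ k₂ t φ (x : ℂ) =
        (∫ x : ℝ, A x * wfun k₁ k₂ t φ (x : ℂ)) + (∫ x : ℝ, B x * wfun k₁ k₂ t φ (x : ℂ)) +
        ∫ x : ℝ, A' x * wfun k₁ k₂ t φ (x : ℂ) := by
    intro A B A' P Q R hP hQ hR
    simp_rw [hP, hQ, hR, add_mul]
    have iP := poly_int k₁ k₂ hk₁ hk₂ t φ hφ₀ hφπ P
    have iQ := poly_int k₁ k₂ hk₁ hk₂ t φ hφ₀ hφπ Q
    have iR := poly_int k₁ k₂ hk₁ hk₂ t φ hφ₀ hφπ R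
    rw [← integral_add iP iQ]
    exact integral_add (iP.add iQ) iR
  let X : Polynomial ℂ := Polynomial.X
  let c : ℂ → Polynomial ℂ := Polynomial.C
  let aP : Polynomial ℂ := c (-Complex.exp (2 * I * φ)) * (c k₂ - c I * X) * (c k₁ - c I * (c t + X))
  let aM : Polynomial ℂ := c (-Complex.exp (-2 * I * φ)) * (c k₂ + c I * X) * (c k₁ + c I * (c t + X))
  let b : Polynomial ℂ := c (k₁ * (1 - k₁) + k₂ * (1 - k₂)) - c 2 * (c t + X) * X
  have haP : ∀ z, aP.eval z = alphaP k₁ k₂ t φ z := by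
    intro z; simp [aP, c, X, alphaP]
  have haM : ∀ z, aM.eval z = alphaM k₁ k₂ t φ z := by
    intro z; simp [aM, c, X, alphaM]
  have hb : ∀ z, b.eval z = betaF k₁ k₂ t z := by
    intro z; simp [b, c, X, betaF]
  have L : ∀ x : ℝ, Lam k₁ k₂ t φ (fun z => q.eval z) (x : ℂ) * conj (r.eval (x : ℂ)) =
      alphaP k₁ k₂ t φ x * (q.eval ((x : ℂ) + I) * s.eval (x : ℂ)) +
      betaF k₁ k₂ t x * (q.eval (x : ℂ) * s.eval (x : ℂ)) +
      alphaM k₁ k₂ t φ x * (q.eval ((x : ℂ) - I) * s.eval (x : ℂ)) := by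
    intro x
    rw [conj_eval, Complex.conj_ofReal, Lam]
    ring
  have R : ∀ x : ℝ, q.eval (x : ℂ) * conj (Lam k₁ k₂ t φ (fun z => r.eval z) (x : ℂ)) =
      alphaP k₁ k₂ t φ x * (q.eval (x : ℂ) * s.eval ((x : ℂ) + I)) +
      betaF k₁ k₂ t x * (q.eval (x : ℂ) * s.eval (x : ℂ)) +
      alphaM k₁ k₂ t φ x * (q.eval (x : ℂ) * s.eval ((x : ℂ) - I)) := by
    intro x
    have c1 : conj (alphaP k₁ k₂ t φ x) = alphaM k₁ k₂ t φ x := by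
      simp [alphaP, alphaM, ← Complex.exp_conj, c2']
    have c2 : conj (alphaM k₁ k₂ t φ x) = alphaP k₁ k₂ t φ x := by
      rw [← c1, Complex.conj_conj]
    have c3 : conj (betaF k₁ k₂ t x) = betaF k₁ k₂ t x := by
      simp [betaF, c2']
    rw [Lam, map_add, map_add, map_mul, map_mul, map_mul, c1, c2, c3, conj_eval, conj_eval, conj_eval]
    simp only [map_add, map_sub, Complex.conj_ofReal, cI, sub_neg_eq_add, ← sub_eq_add_neg, ← hs]
    ring
  simp_rw [L, R]
  rw [hsum _ _ _ (aP * (q.comp (X + c I) * s)) (b * (q * s)) (aM * (q.comp (X - c I) * s))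
      (by intro x; simp [haP, X, c]) (by intro x; simp [hb]) (by intro x; simp [haM, X, c]),
    hsum _ _ _ (aP * (q * s.comp (X + c I))) (b * (q * s)) (aM * (q * s.comp (X - c I)))
      (by intro x; simp [haP, X, c]) (by intro x; simp [hb]) (by intro x; simp [haM, X, c])]
  have s1 := shift_w k₁ k₂ hk₁ hk₂ t φ hφ₀ hφπ (q * s.comp (X - c I))
  have s2 := shift_w k₁ k₂ hk₁ hk₂ t φ hφ₀ hφπ (q.comp (X - c I) * s)
  simp only [X, c, Polynomial.eval_mul, Polynomial.eval_comp, Polynomial.eval_sub, Polynomial.eval_X,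
    Polynomial.eval_C, add_sub_cancel_right] at s1 s2
  rw [s1, s2]
  ring

/-- The weight has finite exponential moments (hence the moment problem is determinate),
the polynomials are dense in `L²(ℝ, w(x)dx)`, and `Λ` is symmetric on polynomials:
`(Λ, 𝒟)` is a densely defined symmetric operator on `L²(ℝ, w(x)dx)`. -/
theorem Lam_densely_defined_symmetric (k₁ k₂ : ℝ) (hk₁ : 0 < k₁) (hk₂ : 0 < k₂) (t : ℝ)
    (φ : ℝ) (hφ₀ : 0 < φ) (hφπ : φ < Real.pi) :
    (∀ ε : ℝ, 0 < ε → ε < min (4 * φ) (4 * (Real.pi - φ)) →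
      Integrable (fun x : ℝ => Real.exp (ε * |x|) * (wfun k₁ k₂ t φ (x : ℂ)).re)) ∧
    Dense {u : Lp ℂ 2 (wMeasure k₁ k₂ t φ) |
      ∃ q : Polynomial ℂ, ∀ᵐ x ∂(wMeasure k₁ k₂ t φ), u x = q.eval (x : ℂ)} ∧
    (∀ q r : Polynomial ℂ,
      (∫ x : ℝ, Lam k₁ k₂ t φ (fun z => q.eval z) (x : ℂ) * conj (r.eval (x : ℂ)) *
          wfun k₁ k₂ t φ (x : ℂ)) =
      ∫ x : ℝ, q.eval (x : ℂ) * conj (Lam k₁ k₂ t φ (fun z => r.eval z) (x : ℂ)) *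
          wfun k₁ k₂ t φ (x : ℂ)) := by
  exact ⟨fun ε h0 h1 => exp_moment k₁ k₂ hk₁ hk₂ t φ ε h0 h1,
    dense_w k₁ k₂ hk₁ hk₂ t φ hφ₀ hφπ, fun q r => sym_w k₁ k₂ hk₁ hk₂ t φ hφ₀ hφπ q r⟩
end
end

section
/- Let k₁ > 1, k₂ > 0, t ∈ ℝ, 0 < φ < π, ρ ∈ ℂ with 1/2 + iρ ≠ 0, and −1 ≤ y ≤ 1. Then as x → ±∞ (x real), Φ_ρ(x+iy) = p(x+iy) e^{−2φ(x+iy)} (ix)^{1/2−k₁−k₂−iρ} { 1 + (A(ρ) + y B(ρ))/(2ix) + O(1/x²) } and Φ_ρ*(x+iy) = p*(x+iy) e^{−2φ(x+iy)} (−ix)^{1/2−k₁−k₂+i·conj(ρ)} { 1 + (conj(A(ρ)) − y·conj(B(ρ)))/(−2ix) + O(1/x²) }, where A(ρ) = 2it(1−2k₁) + (k₁−k₂−1/2−iρ)(3/2−k₁−k₂+iρ) + (k₂−k₁+1/2+iρ)(3/2−k₁−k₂+iρ)(1/2−it+iρ)/(1/2+iρ) and B(ρ) = 2k₁+2k₂−1+2iρ.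 -/
noncomputable section

open MeasureTheory Filter Topology Set Asymptotics ComplexConjugate
open Complex (I)

/-- Pochhammer symbol `(a)ₙ = a(a+1)⋯(a+n-1)`. -/
def poch (a : ℂ) (n : ℕ) : ℂ := ∏ k ∈ Finset.range n, (a + k)

/-- Generalized hypergeometric series `ₚF_q(a; b; z)` as a sum. -/
def pFq (a b : List ℂ) (z : ℂ) : ℂ :=
  ∑' n : ℕ, ((a.map fun c => poch c n).prod / (b.map fun c => poch c n).prod) * z ^ n /
    (n.factorial : ℂ)

def F32 (a b c d e z : ℂ) : ℂ := pFq [a, b, c] [d, e] z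

/-- The `i`-periodic function `p(z) = (1/π) e^{πz} sin(π(k₁ − it − iz))`. -/
def pper (k₁ t : ℝ) (z : ℂ) : ℂ :=
  (1 / (Real.pi : ℂ)) * Complex.exp ((Real.pi : ℂ) * z) *
    Complex.sin ((Real.pi : ℂ) * ((k₁ : ℂ) - I * t - I * z))

/-- The second eigenfunction `Φ_ρ`. -/
def PhiC (k₁ k₂ t φ : ℝ) (ρ : ℂ) (z : ℂ) : ℂ :=
  Complex.exp (-2 * (φ : ℂ) * z) * pper k₁ t z *
    (Complex.Gamma (1 - (k₁ : ℂ) + I * t + I * z) * Complex.Gamma (1 - (k₂ : ℂ) + I * z) /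
      (Complex.Gamma ((k₁ : ℂ) + I * z + I * t) *
        Complex.Gamma (3/2 - (k₁ : ℂ) + I * z + I * ρ))) *
    F32 ((k₂ : ℂ) - (k₁ : ℂ) + 1/2 + I * ρ) (3/2 - (k₁ : ℂ) - (k₂ : ℂ) + I * ρ)
      (1/2 - I * t + I * ρ) (1 + 2 * I * ρ) (3/2 - (k₁ : ℂ) + I * z + I * ρ) 1

/-- The constant `A(ρ)` in the asymptotic expansion of `Φ_ρ`. -/
def Aconst (k₁ k₂ t : ℝ) (ρ : ℂ) : ℂ :=
  2 * I * t * (1 - 2 * (k₁ : ℂ)) +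
    ((k₁ : ℂ) - k₂ - 1/2 - I * ρ) * (3/2 - (k₁ : ℂ) - k₂ + I * ρ) +
    ((k₂ : ℂ) - k₁ + 1/2 + I * ρ) * (3/2 - (k₁ : ℂ) - k₂ + I * ρ) * (1/2 - I * t + I * ρ) /
      (1/2 + I * ρ)

/-- The constant `B(ρ) = 2k₁ + 2k₂ − 1 + 2iρ`. -/
def Bconst (k₁ k₂ : ℝ) (ρ : ℂ) : ℂ := 2 * (k₁ : ℂ) + 2 * (k₂ : ℂ) - 1 + 2 * I * ρ

def gC (a b : ℂ) : ℂ := (a - b) * (a + b - 1) / 2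

def gL (a b w : ℂ) : ℂ := Complex.log (1 + a / w) - Complex.log (1 + b / w)
  - (a - b) * Complex.log (1 + 1 / w) + gC a b / w - gC a b / (w + 1)

def gH (a b w : ℂ) : ℂ := Complex.Gamma (w + a) / Complex.Gamma (w + b) *
  Complex.exp (-(a - b) * Complex.log w - gC a b / w)

lemma log_isBigO (a : ℂ) : (fun u : ℂ => Complex.log (1 + a * u) - (a * u - (a * u) ^ 2 / 2))
    =O[𝓝 0] fun u : ℂ => u ^ 3 := by
  have h := Complex.log_sub_logTaylor_isBigO 2
  have ht : Tendsto (fun u : ℂ => a * u) (𝓝 0) (𝓝 0) := by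
    have : Continuous (fun u : ℂ => a * u) := by fun_prop
    simpa using this.tendsto 0
  have h2 := h.comp_tendsto ht
  have h3 : ((fun x : ℂ => x ^ (2 + 1)) ∘ fun u => a * u) =O[𝓝 0] fun u : ℂ => u ^ 3 := by
    have : ((fun x : ℂ => x ^ (2 + 1)) ∘ fun u => a * u) = fun u => a ^ 3 * u ^ 3 := by
      ext u; simp; ring
    rw [this]
    exact isBigO_const_mul_self _ _ _
  refine (h2.trans h3).congr_left ?_
  intro u
  simp [Complex.logTaylor, Finset.sum_range_succ]
  ring

lemma gL_isBigO (a b : ℂ) : (fun u : ℂ => gL a b u⁻¹) =O[𝓝[≠] 0] fun u : ℂ => u ^ 3 := by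
  have h1 := (log_isBigO a).sub (log_isBigO b)
  have h2 := h1.sub ((log_isBigO 1).const_mul_left (a - b))
  have h3 : (fun u : ℂ => gC a b / (1 + u) * u ^ 3) =O[𝓝 0] fun u : ℂ => u ^ 3 := by
    have hc : Tendsto (fun u : ℂ => gC a b / (1 + u)) (𝓝 0) (𝓝 (gC a b / (1 + 0))) := by
      apply Tendsto.div tendsto_const_nhds _ (by simp)
      exact tendsto_const_nhds.add tendsto_id
    have := (hc.isBigO_one ℂ).mul (isBigO_refl (fun u : ℂ => u ^ 3) (𝓝 0))
    simpa using this
  have h4 := (h2.sub h3).mono (nhdsWithin_le_nhds (s := {0}ᶜ))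
  refine h4.congr' ?_ EventuallyEq.rfl
  have hne : ∀ᶠ u : ℂ in 𝓝[≠] 0, 1 + u ≠ 0 := by
    apply eventually_nhdsWithin_of_eventually_nhds
    have : Continuous (fun u : ℂ => 1 + u) := by fun_prop
    exact this.continuousAt.eventually_ne (by simp)
  filter_upwards [hne, self_mem_nhdsWithin] with u hu hu0
  have hu0 : u ≠ 0 := hu0
  have e1 : gC a b / (u⁻¹ + 1) = gC a b * u / (1 + u) := by
    field_simp
  rw [gL, e1]
  simp only [div_inv_eq_mul, one_mul]
  rw [gC]
  field_simp
  ring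

lemma gL_bound (a b : ℂ) : ∃ C R : ℝ, 0 ≤ C ∧ 1 ≤ R ∧ ∀ w : ℂ, R ≤ ‖w‖ →
    ‖gL a b w‖ ≤ C / ‖w‖ ^ 3 := by
  obtain ⟨C, hC, h⟩ := (gL_isBigO a b).exists_pos
  rw [isBigOWith_iff, eventually_nhdsWithin_iff, Metric.eventually_nhds_iff] at h
  obtain ⟨ε, hε, h⟩ := h
  refine ⟨C, max 1 (2 / ε), hC.le, le_max_left _ _, fun w hw => ?_⟩
  have h1 : 1 ≤ ‖w‖ := (le_max_left _ _).trans hw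
  have h2 : 2 / ε ≤ ‖w‖ := (le_max_right _ _).trans hw
  have hw0 : w ≠ 0 := by
    rintro rfl; simp at h1; linarith
  have := @h w⁻¹ (by
    rw [dist_zero_right, norm_inv]
    rw [inv_lt_comm₀ (by linarith) hε]
    refine lt_of_lt_of_le ?_ h2
    rw [inv_eq_one_div]; gcongr; norm_num) (by simpa using hw0)
  simpa [div_eq_mul_inv] using this

lemma norm_le_norm_add_nat (w : ℂ) (hw : 0 ≤ w.re) (k : ℕ) : ‖w‖ ≤ ‖w + k‖ := by
  have hk : (0 : ℝ) ≤ k := by positivity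
  refine (sq_le_sq₀ (norm_nonneg _) (norm_nonneg _)).1 ?_
  rw [Complex.sq_norm, Complex.sq_norm, Complex.normSq_apply, Complex.normSq_apply]
  simp
  nlinarith

lemma norm_add_nat_ge (w : ℂ) (hw : 0 ≤ w.re) (k : ℕ) : (‖w‖ + k) / 2 ≤ ‖w + k‖ := by
  have h1 : ‖w‖ ≤ ‖w + k‖ := norm_le_norm_add_nat w hw k
  have h2 : (k : ℝ) ≤ ‖w + k‖ := by
    refine le_trans ?_ (Complex.re_le_norm _)
    simpa using hw
  linarith

lemma sum_cube (r : ℝ) (hr : 1 ≤ r) (n : ℕ) :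
    ∑ k ∈ Finset.range n, 1 / (r + k) ^ 3 ≤ 2 / r ^ 2 - 2 / (r + n) ^ 2 := by
  induction n with
  | zero => simp
  | succ n ih =>
    rw [Finset.sum_range_succ]
    have : 1 / (r + n) ^ 3 ≤ 2 / (r + n) ^ 2 - 2 / (r + (n + 1 : ℕ)) ^ 2 := by
      have hm : 1 ≤ r + n := by have : (0:ℝ) ≤ n := by positivity
                                linarith
      push_cast
      rw [← add_assoc]
      generalize r + n = m at hm
      rw [div_sub_div _ _ (by positivity) (by positivity), div_le_div_iff₀ (by positivity) (by positivity)]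
      have : 0 ≤ m ^ 2 * ((m - 1) * (3 * m + 1)) := by
        apply mul_nonneg (by positivity); apply mul_nonneg <;> linarith
      nlinarith
    linarith

lemma gL_sum_bound (a b : ℂ) : ∃ C R : ℝ, 0 ≤ C ∧ 1 ≤ R ∧ ∀ w : ℂ, 0 ≤ w.re → R ≤ ‖w‖ → ∀ n : ℕ,
    ‖∑ k ∈ Finset.range n, gL a b (w + k)‖ ≤ C / ‖w‖ ^ 2 := by
  obtain ⟨C, R, hC, hR, h⟩ := gL_bound a b
  refine ⟨16 * C, R, by positivity, hR, fun w hw hwR n => ?_⟩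
  refine (norm_sum_le _ _).trans ?_
  have hw1 : 1 ≤ ‖w‖ := hR.trans hwR
  calc _ ≤ ∑ k ∈ Finset.range n, (8 * C) * (1 / (‖w‖ + k) ^ 3) := by
        refine Finset.sum_le_sum fun k _ => ?_
        refine (h _ (hwR.trans (norm_le_norm_add_nat w hw k))).trans ?_
        have hp : 0 < (‖w‖ + k) / 2 := by positivity
        calc C / ‖w + k‖ ^ 3 ≤ C / ((‖w‖ + k) / 2) ^ 3 := by
              gcongr; exact norm_add_nat_ge w hw k
          _ = _ := by field_simp; norm_num
    _ = (8 * C) * ∑ k ∈ Finset.range n, (1 / (‖w‖ + k) ^ 3) := by rw [Finset.mul_sum]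
    _ ≤ (8 * C) * (2 / ‖w‖ ^ 2) := by
        gcongr
        refine (sum_cube _ hw1 n).trans ?_
        have : 0 ≤ 2 / (‖w‖ + n) ^ 2 := by positivity
        linarith
    _ = _ := by ring

lemma log_add_one (w : ℂ) (hw : 0 ≤ w.re) (h0 : w ≠ 0) :
    Complex.log (w + 1) = Complex.log w + Complex.log (1 + 1 / w) := by
  have hre : 0 < (1 + 1 / w).re := by
    simp [Complex.inv_re]
    have : 0 ≤ w.re / Complex.normSq w := div_nonneg hw (Complex.normSq_nonneg _)
    linarith
  have hne : 1 + 1 / w ≠ 0 := by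
    intro h; rw [h] at hre; simp at hre
  have e : w + 1 = w * (1 + 1 / w) := by field_simp
  rw [e, Complex.log_mul_eq_add_log_iff h0 hne]
  have h1 := Complex.abs_arg_le_pi_div_two_iff.2 hw
  have h2 := (Complex.abs_arg_lt_pi_div_two_iff.2 (Or.inl hre))
  rw [abs_le] at h1; rw [abs_lt] at h2
  constructor <;> linarith [h1.1, h1.2, h2.1, h2.2]

lemma gH_succ (a b w : ℂ) (hw : 0 ≤ w.re) (h0 : w ≠ 0) (ha : w + a ≠ 0) (hb : w + b ≠ 0) :
    gH a b (w + 1) = gH a b w * Complex.exp (gL a b w) := by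
  have ha' : 1 + a / w ≠ 0 := by
    intro h; apply ha; field_simp at h; simpa using h
  have hb' : 1 + b / w ≠ 0 := by
    intro h; apply hb; field_simp at h; simpa using h
  rw [gH, gH, show w + 1 + a = w + a + 1 by ring, show w + 1 + b = w + b + 1 by ring,
    Complex.Gamma_add_one _ ha, Complex.Gamma_add_one _ hb, log_add_one w hw h0]
  have e : (w + a) / (w + b) = Complex.exp (Complex.log (1 + a / w) - Complex.log (1 + b / w)) := by
    rw [Complex.exp_sub, Complex.exp_log ha', Complex.exp_log hb']
    field_simp
  rw [mul_div_mul_comm, e, mul_assoc (Complex.Gamma (w + a) / _), ← Complex.exp_add, 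
    mul_comm (Complex.exp (_ - _)), mul_assoc, ← Complex.exp_add, gL]
  congr 2
  ring

lemma gH_add_nat (a b w : ℂ) (hw : 0 ≤ w.re) (h0 : w ≠ 0) (ha : ∀ m : ℕ, w + a ≠ -m)
    (hb : ∀ m : ℕ, w + b ≠ -m) (n : ℕ) :
    gH a b (w + n) = gH a b w * Complex.exp (∑ k ∈ Finset.range n, gL a b (w + k)) := by
  induction n with
  | zero => simp
  | succ n ih =>
    rw [Finset.sum_range_succ, Complex.exp_add, ← mul_assoc, ← ih, Nat.cast_succ, ← add_assoc]
    apply gH_succ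
    · simp; positivity
    · intro h
      have := norm_le_norm_add_nat w hw n
      rw [h] at this; simp at this; exact h0 this
    · intro h; apply ha n; linear_combination h
    · intro h; apply hb n; linear_combination h

lemma Gamma_add_nat_succ (z : ℂ) (hz : ∀ m : ℕ, z ≠ -m) (n : ℕ) :
    Complex.Gamma (z + n) = Complex.Gamma z * ∏ j ∈ Finset.range n, (z + j) := by
  induction n with
  | zero => simp
  | succ n ih =>
    rw [Finset.prod_range_succ, ← mul_assoc, ← ih, Nat.cast_succ, ← add_assoc,
      Complex.Gamma_add_one, mul_comm]
    intro h; apply hz n; linear_combination h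

lemma Gamma_tendsto (z : ℂ) (hz : ∀ m : ℕ, z ≠ -m) :
    Tendsto (fun n : ℕ => Complex.Gamma (z + (n + 1 : ℕ)) / ((n : ℂ) ^ z * n.factorial)) atTop (𝓝 1) := by
  have h := (Complex.GammaSeq_tendsto_Gamma z)
  have h0 := Complex.Gamma_ne_zero hz
  have := (tendsto_const_nhds (x := Complex.Gamma z)).div h h0
  rw [div_self h0] at this
  refine this.congr fun n => ?_
  simp only [Pi.div_apply]
  rw [Gamma_add_nat_succ z hz, Complex.GammaSeq, div_div_eq_mul_div]

lemma gH_tendsto (a b w : ℂ) (hw : 0 ≤ w.re) (ha : ∀ m : ℕ, w + a ≠ -m)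
    (hb : ∀ m : ℕ, w + b ≠ -m) :
    Tendsto (fun n : ℕ => gH a b (w + (n + 1 : ℕ))) atTop (𝓝 1) := by
  have h1 := (Gamma_tendsto _ ha).div (Gamma_tendsto _ hb) one_ne_zero
  have hinv : Tendsto (fun n : ℕ => ((n : ℂ))⁻¹) atTop (𝓝 0) := 
    tendsto_inv_atTop_nhds_zero_nat (𝕜 := ℂ)
  have hlog : Tendsto (fun n : ℕ => Complex.log (1 + (w + 1) * (n : ℂ)⁻¹)) atTop (𝓝 0) := by
    have hc : ContinuousAt (fun u : ℂ => Complex.log (1 + (w + 1) * u)) 0 := by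
      apply ContinuousAt.clog
      · fun_prop
      · simp
    have := hc.tendsto.comp hinv
    simpa [Function.comp_def] using this
  have hc2 : Tendsto (fun n : ℕ => gC a b / (w + (n + 1 : ℕ))) atTop (𝓝 0) := by
    have hc : ContinuousAt (fun u : ℂ => gC a b * u / (1 + (w + 1) * u)) 0 := by
      apply ContinuousAt.div
      · fun_prop
      · fun_prop
      · simp
    have := hc.tendsto.comp hinv
    simp only [mul_zero, zero_div] at this
    refine this.congr' ?_
    filter_upwards [eventually_gt_atTop 0] with n hn
    have : (n : ℂ) ≠ 0 := by exact_mod_cast hn.ne'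
    simp only [Function.comp]
    push_cast
    field_simp
    congr 1
    ring
  have h2 : Tendsto (fun n : ℕ => Complex.exp (-(a - b) * Complex.log (1 + (w + 1) * (n : ℂ)⁻¹)
      - gC a b / (w + (n + 1 : ℕ)))) atTop (𝓝 1) := by
    have := (Complex.continuous_exp.tendsto _).comp ((hlog.const_mul (-(a-b))).sub hc2)
    simpa [Function.comp_def] using this
  have h3 := h1.mul h2
  simp only [div_one, mul_one] at h3
  refine h3.congr' ?_
  filter_upwards [eventually_gt_atTop 0] with n hn
  have hn0 : (n : ℂ) ≠ 0 := by exact_mod_cast hn.ne'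
  have hf : (n.factorial : ℂ) ≠ 0 := by exact_mod_cast n.factorial_ne_zero
  have hre : 0 < (w + (n + 1 : ℕ)).re := by simp; positivity
  have e : w + (n + 1 : ℕ) = ((n : ℝ) : ℂ) * (1 + (w + 1) * (n : ℂ)⁻¹) := by
    push_cast; field_simp; ring
  have hne : 1 + (w + 1) * (n : ℂ)⁻¹ ≠ 0 := by
    intro h; rw [e, h] at hre; simp at hre
  have hl : Complex.log (w + (n + 1 : ℕ)) = Complex.log n + Complex.log (1 + (w + 1) * (n : ℂ)⁻¹) := by
    rw [e, Complex.log_ofReal_mul (by exact_mod_cast hn) hne]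
    simp
  simp only [Pi.div_apply]
  rw [gH, hl, Complex.cpow_def_of_ne_zero hn0, Complex.cpow_def_of_ne_zero hn0]
  rw [show w + ((n + 1 : ℕ) : ℂ) + a = w + a + ((n + 1 : ℕ) : ℂ) by ring, 
    show w + ((n + 1 : ℕ) : ℂ) + b = w + b + ((n + 1 : ℕ) : ℂ) by ring,
    div_div_div_comm, mul_div_mul_right _ _ hf, ← Complex.exp_sub, div_mul_eq_mul_div, mul_div_assoc,
    ← Complex.exp_sub]
  congr 2
  ring

lemma gH_bound (a b : ℂ) : ∃ C R : ℝ, 0 ≤ C ∧ 1 ≤ R ∧ ∀ w : ℂ, 0 ≤ w.re → R ≤ ‖w‖ → 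
    (∀ m : ℕ, w + a ≠ -m) → (∀ m : ℕ, w + b ≠ -m) → ‖gH a b w - 1‖ ≤ C / ‖w‖ ^ 2 := by
  obtain ⟨C, R, hC, hR, h⟩ := gL_sum_bound a b
  refine ⟨2 * C, max R C, by positivity, hR.trans (le_max_left _ _), fun w hw hwR ha hb => ?_⟩
  have hw1 : R ≤ ‖w‖ := (le_max_left _ _).trans hwR
  have hw2 : C ≤ ‖w‖ := (le_max_right _ _).trans hwR
  have hw3 : 1 ≤ ‖w‖ := hR.trans hw1
  have h0 : w ≠ 0 := by rintro rfl; simp at hw3; linarith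
  have hT := gH_tendsto a b w hw ha hb
  have key : ∀ n : ℕ, ‖gH a b w - gH a b (w + (n + 1 : ℕ))‖ ≤ 
      ‖gH a b (w + (n + 1 : ℕ))‖ * (2 * C / ‖w‖ ^ 2) := by
    intro n
    have hS := h w hw hw1 (n + 1)
    have e := gH_add_nat a b w hw h0 ha hb (n + 1)
    set S := ∑ k ∈ Finset.range (n + 1), gL a b (w + k)
    have e2 : gH a b w = gH a b (w + (n + 1 : ℕ)) * Complex.exp (-S) := by
      rw [e, mul_assoc, ← Complex.exp_add]; simp
    have hS1 : ‖-S‖ ≤ 1 := by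
      rw [norm_neg]; refine hS.trans ?_
      rw [div_le_one (by positivity)]
      nlinarith
    have := Complex.norm_exp_sub_one_le hS1
    rw [norm_neg] at this
    calc _ = ‖gH a b (w + (n + 1 : ℕ)) * (Complex.exp (-S) - 1)‖ := by
            rw [mul_sub, ← e2, mul_one]
      _ ≤ _ := by
        rw [norm_mul]; gcongr
        refine this.trans ?_
        rw [mul_div_assoc]; gcongr
  have := le_of_tendsto_of_tendsto' ((tendsto_const_nhds.sub hT).norm) (hT.norm.mul_const _) key
  simpa using this

def hterm (a b c d e : ℂ) (n : ℕ) : ℂ :=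
  poch a n * poch b n * poch c n / (poch d n * poch e n) / (n.factorial : ℂ)

lemma F32_eq (a b c d e : ℂ) : F32 a b c d e 1 = ∑' n, hterm a b c d e n := by
  simp [F32, pFq, hterm, mul_assoc]

lemma poch_inv_isBigO (d : ℂ) : (fun n : ℕ => (poch d (n + 1))⁻¹) =O[atTop]
    fun n : ℕ => ((n : ℝ) ^ d.re * n.factorial)⁻¹ := by
  have h := (Complex.GammaSeq_tendsto_Gamma d).isBigO_one ℝ
  have h2 : (fun n : ℕ => ((n : ℂ) ^ d * n.factorial)⁻¹) =O[atTop]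
      fun n : ℕ => ((n : ℝ) ^ d.re * n.factorial)⁻¹ := by
    refine IsBigO.of_norm_eventuallyLE ?_
    filter_upwards [eventually_gt_atTop 0] with n hn
    rw [norm_inv, norm_mul, Complex.norm_natCast_cpow_of_pos hn]
    simp
  have h3 := h.mul h2
  simp only [one_mul] at h3
  refine h3.congr' ?_ EventuallyEq.rfl
  filter_upwards [eventually_gt_atTop 0] with n hn
  have hn0 : (n : ℂ) ≠ 0 := by exact_mod_cast hn.ne'
  have hf : (n.factorial : ℂ) ≠ 0 := by exact_mod_cast n.factorial_ne_zero
  have hp : (n : ℂ) ^ d ≠ 0 := by simp [Complex.cpow_eq_zero_iff, hn0]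
  rw [Complex.GammaSeq, poch, div_mul_eq_mul_div, mul_inv_cancel₀ (mul_ne_zero hp hf), one_div]

lemma poch_isBigO (a : ℂ) : (fun n : ℕ => poch a (n + 1)) =O[atTop]
    fun n : ℕ => ((n : ℝ) ^ a.re * n.factorial) := by
  by_cases ha : ∀ m : ℕ, a ≠ -m
  · have h := ((Complex.GammaSeq_tendsto_Gamma a).inv₀ (Complex.Gamma_ne_zero ha)).isBigO_one ℝ
    have h2 : (fun n : ℕ => ((n : ℂ) ^ a * n.factorial)) =O[atTop]
        fun n : ℕ => ((n : ℝ) ^ a.re * n.factorial) := by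
      refine IsBigO.of_norm_eventuallyLE ?_
      filter_upwards [eventually_gt_atTop 0] with n hn
      rw [norm_mul, Complex.norm_natCast_cpow_of_pos hn]
      simp
    have h3 := h.mul h2
    simp only [one_mul] at h3
    refine h3.congr' ?_ EventuallyEq.rfl
    filter_upwards [eventually_gt_atTop 0] with n hn
    have hn0 : (n : ℂ) ≠ 0 := by exact_mod_cast hn.ne'
    have hf : (n.factorial : ℂ) ≠ 0 := by exact_mod_cast n.factorial_ne_zero
    have hp : (n : ℂ) ^ a ≠ 0 := by simp [Complex.cpow_eq_zero_iff, hn0]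
    rw [Complex.GammaSeq, poch, inv_div, div_mul_cancel₀ _ (mul_ne_zero hp hf)]
  · push Not at ha
    obtain ⟨m, hm⟩ := ha
    have : (fun n : ℕ => poch a (n + 1)) =ᶠ[atTop] fun _ => 0 := by
      filter_upwards [eventually_ge_atTop m] with n hn
      rw [poch]
      apply Finset.prod_eq_zero (i := m) (by simp; omega)
      rw [hm]; simp
    exact this.trans_isBigO (isBigO_zero _ _)

lemma hterm_summable (a b c d e : ℂ) (h : 0 < d.re + e.re - a.re - b.re - c.re) :
    Summable (hterm a b c d e) := by
  rw [← summable_nat_add_iff 1]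
  have hs : Summable fun n : ℕ => (n : ℝ) ^ (-(d.re + e.re - a.re - b.re - c.re) - 1) :=
    Real.summable_nat_rpow.2 (by linarith)
  refine summable_of_isBigO_nat hs ?_
  have hfac : (fun n : ℕ => (((n + 1).factorial : ℕ) : ℂ)⁻¹) =O[atTop]
      fun n : ℕ => ((n : ℝ) * n.factorial)⁻¹ := by
    refine IsBigO.of_norm_eventuallyLE ?_
    filter_upwards [eventually_gt_atTop 0] with n hn
    have hn' : (0 : ℝ) < n := by exact_mod_cast hn
    rw [norm_inv, Complex.norm_natCast, Nat.factorial_succ]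
    push_cast
    gcongr
    linarith
  have hb := ((((poch_isBigO a).mul (poch_isBigO b)).mul (poch_isBigO c)).mul
    ((poch_inv_isBigO d).mul (poch_inv_isBigO e))).mul hfac
  refine hb.congr' ?_ ?_
  · refine Eventually.of_forall fun n => ?_
    simp only [hterm]
    rw [div_div, ← mul_inv, div_eq_mul_inv, mul_inv _ ((n + 1).factorial : ℂ), ← mul_assoc]
  · filter_upwards [eventually_gt_atTop 0] with n hn
    have hn' : (0 : ℝ) < n := by exact_mod_cast hn
    have hf : (n.factorial : ℝ) ≠ 0 := by exact_mod_cast n.factorial_ne_zero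
    have e1 : -(d.re + e.re - a.re - b.re - c.re) - 1 = a.re + b.re + c.re - d.re - e.re - 1 := by ring
    rw [e1, Real.rpow_sub hn', Real.rpow_sub hn', Real.rpow_sub hn', Real.rpow_add hn', Real.rpow_add hn',
      Real.rpow_one]
    have := (Real.rpow_pos_of_pos hn' d.re).ne'
    have := (Real.rpow_pos_of_pos hn' e.re).ne'
    field_simp

lemma norm_e_ge (e : ℂ) (he : 1 ≤ |e.im|) (k : ℕ) : ‖(e.re : ℂ) + I + k‖ ≤ ‖e + k‖ := by
  refine (sq_le_sq₀ (norm_nonneg _) (norm_nonneg _)).1 ?_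
  rw [Complex.sq_norm, Complex.sq_norm, Complex.normSq_apply, Complex.normSq_apply]
  simp
  have := sq_abs e.im
  nlinarith

lemma poch_lower (e : ℂ) (he : 1 ≤ |e.im|) (n : ℕ) :
    |e.im| ^ 2 * ‖poch ((e.re : ℂ) + I) (n + 2)‖ ≤
      ‖((e.re : ℂ) + I) * ((e.re : ℂ) + I + 1)‖ * ‖poch e (n + 2)‖ := by
  induction n with
  | zero =>
    have h1 : |e.im| ≤ ‖e‖ := Complex.abs_im_le_norm e
    have h2 : |e.im| ≤ ‖e + 1‖ := by simpa using Complex.abs_im_le_norm (e + 1)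
    simp only [poch, zero_add, Finset.prod_range_succ, Finset.prod_range_zero, one_mul, 
      Nat.cast_zero, add_zero, Nat.cast_one]
    rw [mul_comm, norm_mul e, sq]
    gcongr
  | succ n ih =>
    have h : ∀ z : ℂ, poch z (n + 1 + 2) = poch z (n + 2) * (z + (n + 2 : ℕ)) := fun z => by
      rw [poch, show n + 1 + 2 = n + 2 + 1 by ring, Finset.prod_range_succ, poch]
    rw [h, h, norm_mul, norm_mul _ (e + _), ← mul_assoc, ← mul_assoc]
    gcongr
    exact norm_e_ge e he _

lemma poch_ne_zero_of_im (e : ℂ) (he : e.im ≠ 0) (n : ℕ) : poch e n ≠ 0 := by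
  rw [poch, Finset.prod_ne_zero_iff]
  intro k _ h
  apply he
  have := congrArg Complex.im h
  simpa using this

lemma F32_bound (a b c d : ℂ) (E : ℝ) (h : 0 < d.re + E - a.re - b.re - c.re) :
    ∃ K : ℝ, ∀ e : ℂ, e.re = E → 1 ≤ |e.im| →
      ‖F32 a b c d e 1 - (1 + a * b * c / d / e)‖ ≤ K / |e.im| ^ 2 := by
  set e1 : ℂ := (E : ℂ) + I with he1
  have hs1 : Summable (hterm a b c d e1) := hterm_summable _ _ _ _ _ (by simpa [he1] using h)
  have hs2 := ((summable_nat_add_iff 2).2 hs1).norm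
  refine ⟨‖e1 * (e1 + 1)‖ * ∑' n, ‖hterm a b c d e1 (n + 2)‖, fun e heE him => ?_⟩
  have hs : Summable (hterm a b c d e) := hterm_summable _ _ _ _ _ (by rw [heE]; exact h)
  have e0 : F32 a b c d e 1 - (1 + a * b * c / d / e) = ∑' n, hterm a b c d e (n + 2) := by
    rw [F32_eq, ← hs.sum_add_tsum_nat_add 2]
    simp [Finset.sum_range_succ, hterm, poch, div_div]
  rw [e0]
  have him0 : 0 < |e.im| := by linarith
  have := tsum_of_norm_bounded (f := fun n => hterm a b c d e (n + 2))
    (hs2.hasSum.mul_left (‖e1 * (e1 + 1)‖ / |e.im| ^ 2)) (fun n => by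
      have hl := poch_lower e him n
      rw [heE, ← he1] at hl
      have p1 : 0 < ‖poch e (n + 2)‖ := norm_pos_iff.2 (poch_ne_zero_of_im _ (by
        intro h; rw [h] at him0; simp at him0) _)
      have p2 : 0 < ‖poch e1 (n + 2)‖ := norm_pos_iff.2 (poch_ne_zero_of_im _ (by
        simp [he1]) _)
      have hl2 : ‖poch e (n + 2)‖⁻¹ ≤ ‖e1 * (e1 + 1)‖ / |e.im| ^ 2 * ‖poch e1 (n + 2)‖⁻¹ := by
        rw [← div_eq_mul_inv, div_div, inv_eq_one_div, div_le_div_iff₀ p1 (by positivity), one_mul]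
        exact hl
      have hq : ∀ z : ℂ, ‖hterm a b c d z (n + 2)‖ = ‖poch z (n + 2)‖⁻¹ * 
          (‖poch a (n + 2) * poch b (n + 2) * poch c (n + 2)‖ * ‖poch d (n+2)‖⁻¹ * ‖((n+2).factorial : ℂ)‖⁻¹) := by
        intro z
        simp only [hterm, norm_inv, norm_mul, div_eq_mul_inv, mul_inv]
        ring
      rw [hq, hq]
      refine (mul_le_mul_of_nonneg_right hl2 ?_).trans (le_of_eq (mul_assoc _ _ _))
      positivity)
  refine this.trans (le_of_eq ?_)
  ring

def Asy (f : ℝ → ℂ) (c : ℂ) : Prop :=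
  (fun x : ℝ => f x - (1 + c / (I * x))) =O[cocompact ℝ] fun x : ℝ => (x ^ 2)⁻¹

lemma ev_abs (M : ℝ) : ∀ᶠ x : ℝ in cocompact ℝ, M ≤ |x| := by
  have := tendsto_norm_cocompact_atTop (E := ℝ)
  exact this.eventually_ge_atTop M

lemma inv_bigO : (fun x : ℝ => (I * (x : ℂ))⁻¹) =O[cocompact ℝ] fun x : ℝ => x⁻¹ := by
  refine IsBigO.of_bound 1 (Eventually.of_forall fun x => ?_)
  simp

lemma inv_bigO_one : (fun x : ℝ => (x : ℝ)⁻¹) =O[cocompact ℝ] fun _ : ℝ => (1 : ℝ) := by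
  refine IsBigO.of_bound 1 ?_
  filter_upwards [ev_abs 1] with x hx
  simp only [norm_inv, Real.norm_eq_abs, one_mul, norm_one]
  exact inv_le_one_of_one_le₀ hx

lemma cdiv_bigO (c : ℂ) : (fun x : ℝ => c / (I * (x : ℂ))) =O[cocompact ℝ] fun x : ℝ => x⁻¹ := by
  simp only [div_eq_mul_inv]
  exact inv_bigO.const_mul_left c

lemma Asy.mulA {f g : ℝ → ℂ} {c d : ℂ} (hf : Asy f c) (hg : Asy g d) :
    Asy (fun x => f x * g x) (c + d) := by
  unfold Asy at hf hg ⊢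
  have one : ∀ c : ℂ, (fun x : ℝ => 1 + c / (I * (x : ℂ))) =O[cocompact ℝ] fun _ : ℝ => (1 : ℝ) := by
    intro c
    exact (isBigO_const_const 1 one_ne_zero _).add ((cdiv_bigO c).trans inv_bigO_one)
  have sq1 : (fun x : ℝ => (x ^ 2)⁻¹) =O[cocompact ℝ] fun _ : ℝ => (1 : ℝ) := by
    have := inv_bigO_one.mul inv_bigO_one
    simpa [sq] using this
  have t1 := IsBigO.mul hf (IsBigO.trans hg sq1)
  have t2 := IsBigO.mul hf (one d)
  have t3 := IsBigO.mul (one c) hg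
  have t4 := (cdiv_bigO c).mul (cdiv_bigO d)
  simp only [mul_one, one_mul] at t1 t2 t3
  have t4' : (fun x : ℝ => c / (I * (x : ℂ)) * (d / (I * (x : ℂ)))) =O[cocompact ℝ] 
      fun x : ℝ => (x ^ 2)⁻¹ := by
    simpa [sq] using t4
  refine (((t1.add t2).add t3).add t4').congr_left fun x => ?_
  ring

lemma Asy_exp (c : ℂ) : Asy (fun x => Complex.exp (c / (I * x))) c := by
  refine IsBigO.of_bound (‖c‖ ^ 2) ?_
  filter_upwards [ev_abs (max 1 ‖c‖)] with x hx
  have h1 : 1 ≤ |x| := (le_max_left _ _).trans hx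
  have h2 : ‖c‖ ≤ |x| := (le_max_right _ _).trans hx
  have hn : ‖c / (I * x)‖ = ‖c‖ / |x| := by simp
  have := Complex.norm_exp_sub_one_sub_id_le (x := c / (I * x)) (by
    rw [hn]; exact div_le_one_of_le₀ h2 (abs_nonneg _))
  rw [← sub_sub]
  refine this.trans (le_of_eq ?_)
  rw [hn, div_pow, sq_abs]
  simp [div_eq_mul_inv]

lemma Asy_gH (a b : ℂ) : Asy (fun x => gH a b (I * x)) 0 := by
  obtain ⟨C, R, hC, hR, h⟩ := gH_bound a b
  refine IsBigO.of_bound C ?_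
  filter_upwards [ev_abs R, ev_abs (|a.im| + 1), ev_abs (|b.im| + 1)] with x hx hxa hxb
  have ne : ∀ a : ℂ, |a.im| + 1 ≤ |x| → ∀ m : ℕ, I * (x : ℂ) + a ≠ -m := by
    intro a hxa m hm
    have := congrArg Complex.im hm
    simp at this
    have hx : x = - a.im := by linarith
    rw [hx, abs_neg] at hxa
    linarith
  have := h (I * x) (by simp) (by simpa using hx) (ne a hxa) (ne b hxb)
  simpa [div_eq_mul_inv] using this

lemma Asy_Gamma (a b : ℂ) : Asy (fun x => Complex.Gamma (I * x + a) / Complex.Gamma (I * x + b) *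
    (I * (x : ℂ)) ^ (-(a - b))) (gC a b) := by
  have := (Asy_gH a b).mulA (Asy_exp (gC a b))
  rw [zero_add] at this
  refine this.congr' ?_ EventuallyEq.rfl
  filter_upwards [ev_abs 1] with x hx
  have hx0 : I * (x : ℂ) ≠ 0 := by
    have : x ≠ 0 := by rintro rfl; simp at hx; linarith
    simpa using this
  rw [gH, Complex.cpow_def_of_ne_zero hx0, mul_assoc, ← Complex.exp_add]
  congr 4
  ring

lemma Asy_F32 (a b c d e : ℂ) (h : 0 < d.re + e.re - a.re - b.re - c.re) :
    Asy (fun x => F32 a b c d (I * x + e) 1) (a * b * c / d) := by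
  obtain ⟨K, hK⟩ := F32_bound a b c d e.re h
  set q := a * b * c / d
  have h1 : (fun x : ℝ => F32 a b c d (I * x + e) 1 - (1 + q / (I * x + e))) =O[cocompact ℝ] 
      fun x : ℝ => (x ^ 2)⁻¹ := by
    refine IsBigO.of_bound (4 * |K|) ?_
    filter_upwards [ev_abs (2 * |e.im| + 2)] with x hx
    have him : (I * (x : ℂ) + e).im = x + e.im := by simp
    have h3 : |x| / 2 ≤ |x + e.im| := by
      have := abs_sub_abs_le_abs_sub x (-e.im)
      rw [abs_neg, sub_neg_eq_add] at this
      linarith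
    have h0 := abs_nonneg e.im
    have hx1 : 0 < |x| := by linarith
    have := hK (I * x + e) (by simp) (by rw [him]; linarith)
    rw [him] at this
    refine this.trans ?_
    calc K / |x + e.im| ^ 2 ≤ |K| / |x + e.im| ^ 2 := by gcongr; exact le_abs_self K
      _ ≤ |K| / (|x| / 2) ^ 2 := by gcongr
      _ = _ := by
        rw [div_pow, sq_abs, norm_inv, norm_pow, Real.norm_eq_abs, sq_abs]
        have : x ≠ 0 := abs_pos.1 hx1
        field_simp; norm_num
  have h2 : (fun x : ℝ => q / (I * x + e) - q / (I * x)) =O[cocompact ℝ] 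
      fun x : ℝ => (x ^ 2)⁻¹ := by
    refine IsBigO.of_bound (2 * (‖q‖ * ‖e‖)) ?_
    filter_upwards [ev_abs (2 * ‖e‖ + 2)] with x hx
    have h0 := norm_nonneg e
    have hx1 : 0 < |x| := by linarith
    have hn : ‖I * (x : ℂ)‖ = |x| := by simp
    have h3 : |x| / 2 ≤ ‖I * (x : ℂ) + e‖ := by
      have := norm_sub_norm_le (I * (x : ℂ)) (-e)
      rw [norm_neg, sub_neg_eq_add, hn] at this
      linarith
    have ne1 : I * (x : ℂ) ≠ 0 := by rw [← norm_pos_iff, hn]; exact hx1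
    have ne2 : I * (x : ℂ) + e ≠ 0 := by rw [← norm_pos_iff]; linarith
    have e1 : q / (I * x + e) - q / (I * x) = - (q * e) / ((I * x + e) * (I * x)) := by
      rw [div_sub_div _ _ ne2 ne1]; congr 1; ring
    rw [e1, norm_div, norm_neg, norm_mul, norm_mul, hn]
    calc ‖q‖ * ‖e‖ / (‖I * (x : ℂ) + e‖ * |x|) ≤ ‖q‖ * ‖e‖ / (|x| / 2 * |x|) := by gcongr
      _ = _ := by
        rw [norm_inv, norm_pow, Real.norm_eq_abs]
        field_simp
  refine (h1.add h2).congr_left fun x => ?_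
  ring

lemma PhiC_main (k₁ k₂ : ℝ) (t φ : ℝ) (ρ : ℂ) (hρ : 1/2 + I * ρ ≠ 0) (y : ℝ) (hy : y < k₁) :
    (fun x : ℝ => PhiC k₁ k₂ t φ ρ ((x : ℂ) + I * y) -
        pper k₁ t ((x : ℂ) + I * y) * Complex.exp (-2 * (φ : ℂ) * ((x : ℂ) + I * y)) *
          (I * (x : ℂ)) ^ (1/2 - (k₁ : ℂ) - k₂ - I * ρ) *
          (1 + (Aconst k₁ k₂ t ρ + (y : ℂ) * Bconst k₁ k₂ ρ) / (2 * I * x)))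
      =O[cocompact ℝ] fun x : ℝ =>
        ‖pper k₁ t ((x : ℂ) + I * y) * Complex.exp (-2 * (φ : ℂ) * ((x : ℂ) + I * y)) *
          (I * (x : ℂ)) ^ (1/2 - (k₁ : ℂ) - k₂ - I * ρ)‖ / x ^ 2 := by
  have hA := ((Asy_Gamma (1 - k₁ + I * t - y) (k₁ + I * t - y)).mulA
    (Asy_Gamma (1 - k₂ - y) (3 / 2 - k₁ + I * ρ - y))).mulA
    (Asy_F32 ((k₂ : ℂ) - (k₁ : ℂ) + 1/2 + I * ρ) (3/2 - (k₁ : ℂ) - (k₂ : ℂ) + I * ρ)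
      (1/2 - I * t + I * ρ) (1 + 2 * I * ρ) (3 / 2 - k₁ + I * ρ - y) (by
        simp; linarith))
  set P : ℝ → ℂ := fun x => pper k₁ t ((x : ℂ) + I * y) *
    Complex.exp (-2 * (φ : ℂ) * ((x : ℂ) + I * y)) *
          (I * (x : ℂ)) ^ (1/2 - (k₁ : ℂ) - k₂ - I * ρ) with hP
  have hB := (isBigO_refl P (cocompact ℝ)).norm_right.mul hA
  refine hB.congr' ?_ ?_
  · filter_upwards [ev_abs 1] with x hx
    have hx0 : (x : ℂ) ≠ 0 := by
      have : x ≠ 0 := by rintro rfl; simp at hx; linarith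
      simpa using this
    have hw : I * (x : ℂ) ≠ 0 := mul_ne_zero Complex.I_ne_zero hx0
    have hd : 1 + 2 * I * ρ ≠ 0 := by
      intro h; apply hρ; linear_combination h / 2
    have hI2 : I * (I * (y : ℂ)) = -y := by rw [← mul_assoc, Complex.I_mul_I]; ring
    have hpow : (I * (x : ℂ)) ^ (1/2 - (k₁ : ℂ) - k₂ - I * ρ) *
        ((I * (x : ℂ)) ^ (-((1 - k₁ + I * t - y) - (k₁ + I * t - y) : ℂ)) *
        (I * (x : ℂ)) ^ (-((1 - k₂ - y) - (3 / 2 - k₁ + I * ρ - y) : ℂ))) = 1 := by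
      rw [← Complex.cpow_add _ _ hw, ← Complex.cpow_add _ _ hw]
      convert Complex.cpow_zero _ using 2
      ring
    have hc : (gC (1 - k₁ + I * t - y) (k₁ + I * t - y) + 
        gC (1 - k₂ - y) (3 / 2 - k₁ + I * ρ - y) + 
        ((k₂ : ℂ) - (k₁ : ℂ) + 1/2 + I * ρ) * (3/2 - (k₁ : ℂ) - (k₂ : ℂ) + I * ρ) *
      (1/2 - I * t + I * ρ) / (1 + 2 * I * ρ)) / (I * x) = 
       (Aconst k₁ k₂ t ρ + (y : ℂ) * Bconst k₁ k₂ ρ) / (2 * I * x) := by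
      have hdd : (1/2 + I * ρ) = (1 + 2 * I * ρ) / 2 := by ring
      rw [Aconst, Bconst, gC, gC, hdd, mul_assoc 2 I (x : ℂ), ← div_div _ (2:ℂ)]
      congr 1
      rw [div_div_eq_mul_div]
      ring
    rw [hc, mul_sub]
    congr 1
    rw [PhiC, hP]
    simp only [mul_add I, hI2]
    rw [show (1 - (k₁ : ℂ) + I * t + (I * x + -y)) = I * x + (1 - k₁ + I * t - y) by ring,
      show (1 - (k₂ : ℂ) + (I * x + -y)) = I * x + (1 - k₂ - y) by ring,
      show ((k₁ : ℂ) + (I * x + -y) + I * t) = I * x + (k₁ + I * t - y) by ring,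
      show (3/2 - (k₁ : ℂ) + (I * x + -y) + I * ρ) = I * x + (3 / 2 - k₁ + I * ρ - y) by ring,
      mul_div_mul_comm]
    linear_combination (Complex.exp (-2 * (φ : ℂ) * ((x : ℂ) + I * y)) * pper k₁ t ((x : ℂ) + I * y) *
      (Complex.Gamma (I * x + (1 - k₁ + I * t - y)) / Complex.Gamma (I * x + (k₁ + I * t - y)) * 
        (Complex.Gamma (I * x + (1 - k₂ - y)) / Complex.Gamma (I * x + (3 / 2 - k₁ + I * ρ - y)))) *
      F32 ((k₂ : ℂ) - (k₁ : ℂ) + 1/2 + I * ρ) (3/2 - (k₁ : ℂ) - (k₂ : ℂ) + I * ρ)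
      (1/2 - I * t + I * ρ) (1 + 2 * I * ρ) (I * x + (3 / 2 - k₁ + I * ρ - y)) 1) * hpow
  · exact Eventually.of_forall fun x => by simp [hP, div_eq_mul_inv]

lemma conj_two : conj (2 : ℂ) = 2 := Complex.conj_ofNat 2

lemma PhiC_conj (k₁ k₂ : ℝ) (t φ : ℝ) (ρ : ℂ) (hρ : 1/2 + I * ρ ≠ 0) (y : ℝ) (hy : -y < k₁) :
    (fun x : ℝ => conj (PhiC k₁ k₂ t φ ρ (conj ((x : ℂ) + I * y))) -
        conj (pper k₁ t (conj ((x : ℂ) + I * y))) *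
          Complex.exp (-2 * (φ : ℂ) * ((x : ℂ) + I * y)) *
          (-I * (x : ℂ)) ^ (1/2 - (k₁ : ℂ) - k₂ + I * conj ρ) *
          (1 + (conj (Aconst k₁ k₂ t ρ) - (y : ℂ) * conj (Bconst k₁ k₂ ρ)) / (-2 * I * x)))
      =O[cocompact ℝ] fun x : ℝ =>
        ‖conj (pper k₁ t (conj ((x : ℂ) + I * y))) *
          Complex.exp (-2 * (φ : ℂ) * ((x : ℂ) + I * y)) *
          (-I * (x : ℂ)) ^ (1/2 - (k₁ : ℂ) - k₂ + I * conj ρ)‖ / x ^ 2 := by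
  have h := PhiC_main k₁ k₂ t φ ρ hρ (-y) hy
  have hz : ∀ x : ℝ, conj ((x : ℂ) + I * y) = (x : ℂ) + I * ((-y : ℝ) : ℂ) := by
    intro x; simp
  have hexp : ∀ x : ℝ, conj (Complex.exp (-2 * (φ : ℂ) * ((x : ℂ) + I * ((-y : ℝ) : ℂ)))) =
      Complex.exp (-2 * (φ : ℂ) * ((x : ℂ) + I * y)) := by
    intro x
    rw [← Complex.exp_conj]
    simp [conj_two]
  have hpow : ∀ x : ℝ, x ≠ 0 → conj ((I * (x : ℂ)) ^ (1/2 - (k₁ : ℂ) - k₂ - I * ρ)) = 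
      (-I * (x : ℂ)) ^ (1/2 - (k₁ : ℂ) - k₂ + I * conj ρ) := by
    intro x hx
    have := Complex.conj_cpow (I * (x : ℂ)) (1/2 - (k₁ : ℂ) - k₂ + I * conj ρ) (by
      intro h
      rw [Complex.arg_eq_pi_iff] at h
      simp at h)
    have e1 : conj (I * (x : ℂ)) = -I * x := by simp
    have e2 : conj (1/2 - (k₁ : ℂ) - k₂ + I * conj ρ) = 1/2 - (k₁ : ℂ) - k₂ - I * ρ := by
      simp [conj_two, sub_eq_add_neg]
    rw [e1, e2] at this
    exact this.symm
  have h' := (IsBigO.of_norm_left (f' := fun x : ℝ => conj (PhiC k₁ k₂ t φ ρ ((x : ℂ) + I * ((-y : ℝ) : ℂ)) -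
        pper k₁ t ((x : ℂ) + I * ((-y : ℝ) : ℂ)) * Complex.exp (-2 * (φ : ℂ) * ((x : ℂ) + I * ((-y : ℝ) : ℂ))) *
          (I * (x : ℂ)) ^ (1/2 - (k₁ : ℂ) - k₂ - I * ρ) *
          (1 + (Aconst k₁ k₂ t ρ + ((-y : ℝ) : ℂ) * Bconst k₁ k₂ ρ) / (2 * I * x)))) 
          (by simpa only [RCLike.norm_conj] using h.norm_left))
  refine h'.congr' ?_ ?_
  · filter_upwards [ev_abs 1] with x hx
    have hx0 : x ≠ 0 := by rintro rfl; simp at hx; linarith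
    rw [hz, ← hexp, ← hpow x hx0]
    simp [sub_eq_add_neg, conj_two]
  · filter_upwards [ev_abs 1] with x hx
    have hx0 : x ≠ 0 := by rintro rfl; simp at hx; linarith
    rw [hz, ← hexp, ← hpow x hx0, ← map_mul, ← map_mul, RCLike.norm_conj]

/-- Asymptotic behaviour of `Φ_ρ(x+iy)` and `Φ_ρ*(x+iy)` as `x → ±∞`:
`Φ_ρ(x+iy) = p(x+iy) e^{−2φ(x+iy)} (ix)^{1/2−k₁−k₂−iρ}(1 + (A(ρ)+yB(ρ))/(2ix) + O(1/x²))` and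
`Φ_ρ*(x+iy) = p*(x+iy) e^{−2φ(x+iy)} (−ix)^{1/2−k₁−k₂+i conj ρ}(1 + (conj A(ρ) − y conj B(ρ))/(−2ix) + O(1/x²))`. -/
theorem PhiC_asymptotics (k₁ k₂ : ℝ) (hk₁ : 1 < k₁) (hk₂ : 0 < k₂) (t : ℝ)
    (φ : ℝ) (hφ₀ : 0 < φ) (hφπ : φ < Real.pi) (ρ : ℂ) (hρ : 1/2 + I * ρ ≠ 0)
    (y : ℝ) (hy : -1 ≤ y) (hy' : y ≤ 1) :
    ((fun x : ℝ => PhiC k₁ k₂ t φ ρ ((x : ℂ) + I * y) -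
        pper k₁ t ((x : ℂ) + I * y) * Complex.exp (-2 * (φ : ℂ) * ((x : ℂ) + I * y)) *
          (I * (x : ℂ)) ^ (1/2 - (k₁ : ℂ) - k₂ - I * ρ) *
          (1 + (Aconst k₁ k₂ t ρ + (y : ℂ) * Bconst k₁ k₂ ρ) / (2 * I * x)))
      =O[atTop] fun x : ℝ =>
        ‖pper k₁ t ((x : ℂ) + I * y) * Complex.exp (-2 * (φ : ℂ) * ((x : ℂ) + I * y)) *
          (I * (x : ℂ)) ^ (1/2 - (k₁ : ℂ) - k₂ - I * ρ)‖ / x ^ 2) ∧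
    ((fun x : ℝ => PhiC k₁ k₂ t φ ρ ((x : ℂ) + I * y) -
        pper k₁ t ((x : ℂ) + I * y) * Complex.exp (-2 * (φ : ℂ) * ((x : ℂ) + I * y)) *
          (I * (x : ℂ)) ^ (1/2 - (k₁ : ℂ) - k₂ - I * ρ) *
          (1 + (Aconst k₁ k₂ t ρ + (y : ℂ) * Bconst k₁ k₂ ρ) / (2 * I * x)))
      =O[atBot] fun x : ℝ =>
        ‖pper k₁ t ((x : ℂ) + I * y) * Complex.exp (-2 * (φ : ℂ) * ((x : ℂ) + I * y)) *
          (I * (x : ℂ)) ^ (1/2 - (k₁ : ℂ) - k₂ - I * ρ)‖ / x ^ 2) ∧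
    ((fun x : ℝ => conj (PhiC k₁ k₂ t φ ρ (conj ((x : ℂ) + I * y))) -
        conj (pper k₁ t (conj ((x : ℂ) + I * y))) *
          Complex.exp (-2 * (φ : ℂ) * ((x : ℂ) + I * y)) *
          (-I * (x : ℂ)) ^ (1/2 - (k₁ : ℂ) - k₂ + I * conj ρ) *
          (1 + (conj (Aconst k₁ k₂ t ρ) - (y : ℂ) * conj (Bconst k₁ k₂ ρ)) / (-2 * I * x)))
      =O[atTop] fun x : ℝ =>
        ‖conj (pper k₁ t (conj ((x : ℂ) + I * y))) *
          Complex.exp (-2 * (φ : ℂ) * ((x : ℂ) + I * y)) *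
          (-I * (x : ℂ)) ^ (1/2 - (k₁ : ℂ) - k₂ + I * conj ρ)‖ / x ^ 2) ∧
    ((fun x : ℝ => conj (PhiC k₁ k₂ t φ ρ (conj ((x : ℂ) + I * y))) -
        conj (pper k₁ t (conj ((x : ℂ) + I * y))) *
          Complex.exp (-2 * (φ : ℂ) * ((x : ℂ) + I * y)) *
          (-I * (x : ℂ)) ^ (1/2 - (k₁ : ℂ) - k₂ + I * conj ρ) *
          (1 + (conj (Aconst k₁ k₂ t ρ) - (y : ℂ) * conj (Bconst k₁ k₂ ρ)) / (-2 * I * x)))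
      =O[atBot] fun x : ℝ =>
        ‖conj (pper k₁ t (conj ((x : ℂ) + I * y))) *
          Complex.exp (-2 * (φ : ℂ) * ((x : ℂ) + I * y)) *
          (-I * (x : ℂ)) ^ (1/2 - (k₁ : ℂ) - k₂ + I * conj ρ)‖ / x ^ 2) := by
  have hm := PhiC_main k₁ k₂ t φ ρ hρ y (by linarith)
  have hc := PhiC_conj k₁ k₂ t φ ρ hρ y (by linarith)
  rw [cocompact_eq_atBot_atTop, isBigO_sup] at hm hc
  exact ⟨hm.2, hm.1, hc.2, hc.1⟩
end
end
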